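/- arXiv:1207.1481 — 2 statements merged into one kernel-verified Lean document; each statement's English description precedes it below -/
import Mathlib

section
/- For every irrational number ρ (mod 1), there exists an orientation-preserving C^1 circle diffeomorphism f with rotation number ρ which is a Denjoy counter-example (admits a minimal invariant Cantor set) and a point x_0 in the complement of the minimal Cantor set such that S := Σ_{n ∈ ℤ} D(f^n)(x_0) < ∞; in particular, the probability measure ν := (1/S) Σ_{n ∈ ℤ} D(f^n)(x_0) · δ_{f^n(x_0)} is 1-automorphic for f. -/
/-!
The proof is Denjoy's construction, carried out on lifts to the line, with gap lengths and a
derivative profile chosen so that the derivatives along one wandering orbit are explicit.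

The orbit of `0` under the rotation by `ρ` is blown up: the point `n * ρ` is replaced by a gap of
length `len n`, proportional to `1 / (n ^ 2 + 100)`, so that the lengths are summable (with sum
`1 / 2`) while the ratios `len (n + 1) / len n = 1 + eps n` tend to `1` as `|n| → ∞` and stay close
to `1`. The two ends of the interval over `t` are `Hm ρ t ≤ Hp ρ t`: half of Lebesgue measure plus
the lengths of the gaps passed. They differ exactly over the orbit of `0`, and the intervals
`[Hm ρ t, Hp ρ t]` are disjoint and cover the line (`Hp_lt_Hm`, `exists_mem_Icc`).

The lift has derivative `dlift = 1 + ∑ eps n * bump`, the `n`-th bump being rescaled to the `n`-th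
gap. The gaps are disjoint and `eps n → 0`, so this series converges uniformly
(`tendstoUniformly_dlift`) and the lift is `C¹` with positive derivative. The bump has integral `1`,
so the `n`-th gap is stretched to the length of the next one, and the lift maps `Hm ρ t` to
`Hm ρ (t + ρ)` and `Hp ρ t` to `Hp ρ (t + ρ)` (`lift_Hm`, `lift_Hp`). This semiconjugacy gives the
rotation number (`rot_diffeo`). It also shows that the set of all ends `Hm ρ t`, `Hp ρ t`, whose
complement is the union of the open gaps, is invariant, and that its orbits accumulate at each of
its points because the rotation by `ρ` has dense orbits. It projects to the minimal Cantor set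
(`isMinimalInvariantCantor`).

The bump is symmetric with value `1` at its centre. Hence the centre of each gap is sent to the
centre of the next one, with derivative exactly `len (n + 1) / len n`. For `x₀` the centre of the
gap over `0` the product telescopes to `D(fⁿ)(x₀) = len n / len 0` (`DfZ_centre`), which is
summable. Finally `D(fⁿ⁺¹)(x₀) = Df(fⁿ(x₀)) * D(fⁿ)(x₀)`, so shifting the index in the sum defining
the orbit measure gives the automorphic identity (`automorphic_orbitMeasure`).
-/

open MeasureTheory Function Filter Set
open scoped Topology

noncomputable section

/-- The circle `ℝ/ℤ`. -/
abbrev 𝕊 : Type := UnitAddCircle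

/-- An orientation-preserving `C¹` diffeomorphism of the circle `ℝ/ℤ`, described by a lift
`F : ℝ → ℝ` (a `C¹` map commuting with the unit translation, with everywhere positive
derivative, admitting a `C¹` inverse). -/
structure C1Diffeo : Type where
  F : ℝ → ℝ
  Finv : ℝ → ℝ
  contDiff : ContDiff ℝ 1 F
  contDiff_inv : ContDiff ℝ 1 Finv
  deriv_pos : ∀ x, 0 < deriv F x
  map_add_one : ∀ x, F (x + 1) = F x + 1
  left_inv : Function.LeftInverse Finv F
  right_inv : Function.RightInverse Finv F

/-- If a map `ℝ → ℝ` commutes with the unit translation, so do its iterates. -/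
lemma iterate_map_add_one {G : ℝ → ℝ} (h : ∀ x, G (x + 1) = G x + 1) (n : ℕ) (x : ℝ) :
    G^[n] (x + 1) = G^[n] x + 1 := by
  induction n with
  | zero => simp
  | succ n ih => rw [Function.iterate_succ_apply', Function.iterate_succ_apply', ih, h]

/-- The derivative of a periodic function is periodic. -/
lemma Function.Periodic.deriv' {G : ℝ → ℝ} (h : Function.Periodic G 1) :
    Function.Periodic (deriv G) 1 := by
  intro x
  have h2 : (fun y => G (y + 1)) = G := funext h
  have h3 := congrArg (fun k : ℝ → ℝ => deriv k x) h2
  simpa [deriv_comp_add_const] using h3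

/-- The derivative of a map commuting with the unit translation is periodic. -/
lemma periodic_deriv_of_shift {G : ℝ → ℝ} (h : ∀ x, G (x + 1) = G x + 1) :
    Function.Periodic (deriv G) 1 := by
  intro x
  have h2 : (fun y => G (y + 1)) = fun y => G y + 1 := funext h
  have h3 := congrArg (fun k : ℝ → ℝ => deriv k x) h2
  simpa [deriv_comp_add_const, deriv_add_const] using h3

namespace C1Diffeo

variable (f : C1Diffeo)

lemma inv_map_add_one : ∀ x, f.Finv (x + 1) = f.Finv x + 1 := fun x => by
  conv_lhs => rw [← f.right_inv x]
  rw [← f.map_add_one, f.left_inv]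

/-- Lift of the `n`-th iterate of `f`, `n : ℤ`. -/
def iterZ : ℤ → ℝ → ℝ
  | Int.ofNat n => f.F^[n]
  | Int.negSucc n => f.Finv^[n + 1]

lemma iterZ_map_add_one (n : ℤ) (x : ℝ) : f.iterZ n (x + 1) = f.iterZ n x + 1 := by
  cases n with
  | ofNat n => exact iterate_map_add_one f.map_add_one n x
  | negSucc n => exact iterate_map_add_one f.inv_map_add_one (n + 1) x

/-- The induced self-map of the circle. -/
def toCircle : 𝕊 → 𝕊 :=
  Function.Periodic.lift (f := fun x : ℝ => ((f.F x : ℝ) : 𝕊)) (fun x => by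
    show ((f.F (x + 1) : ℝ) : 𝕊) = ((f.F x : ℝ) : 𝕊)
    rw [f.map_add_one]
    exact AddCircle.coe_add_period 1 (f.F x))

/-- The `n`-th iterate (`n : ℤ`) of the induced self-map of the circle. -/
def mapZ (n : ℤ) : 𝕊 → 𝕊 :=
  Function.Periodic.lift (f := fun x : ℝ => ((f.iterZ n x : ℝ) : 𝕊)) (fun x => by
    show ((f.iterZ n (x + 1) : ℝ) : 𝕊) = ((f.iterZ n x : ℝ) : 𝕊)
    rw [f.iterZ_map_add_one]
    exact AddCircle.coe_add_period 1 (f.iterZ n x))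

/-- The derivative `Df`, as a function on the circle. -/
def Df : 𝕊 → ℝ := (periodic_deriv_of_shift f.map_add_one).lift

/-- The derivative `D(fⁿ)` of the `n`-th iterate (`n : ℕ`), as a function on the circle. -/
def DfIter (n : ℕ) : 𝕊 → ℝ :=
  (periodic_deriv_of_shift (iterate_map_add_one f.map_add_one n)).lift

/-- The derivative `D(fⁿ)` of the `n`-th iterate (`n : ℤ`), as a function on the circle. -/
def DfZ (n : ℤ) : 𝕊 → ℝ := (periodic_deriv_of_shift (f.iterZ_map_add_one n)).lift

/-- The lift, as a degree one monotone map of the real line. -/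
def deg1 : CircleDeg1Lift :=
  ⟨⟨f.F, (strictMono_of_deriv_pos f.deriv_pos).monotone⟩, f.map_add_one⟩

/-- The rotation number of `f` (the translation number of the given lift). -/
def rot : ℝ := f.deg1.translationNumber

end C1Diffeo

/-- The lift to `ℝ` of a function on the circle. -/
def lft (u : 𝕊 → ℝ) : ℝ → ℝ := fun x => u ↑x

lemma lft_periodic (u : 𝕊 → ℝ) : Function.Periodic (lft u) 1 := fun x => by
  simp only [lft]
  rw [AddCircle.coe_add_period]

/-- A function on the circle is `C¹` if its lift to `ℝ` is `C¹`. -/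
def IsC1 (u : 𝕊 → ℝ) : Prop := ContDiff ℝ 1 (lft u)

/-- The derivative of a function on the circle (the descent of the derivative
of its lift). -/
def derivS (u : 𝕊 → ℝ) : 𝕊 → ℝ := ((lft_periodic u).deriv').lift

/-- The `C¹` norm of a function on the circle. -/
def c1Norm (u : 𝕊 → ℝ) : ℝ := (⨆ x : 𝕊, |u x|) + ⨆ x : 𝕊, |derivS u x|

/-- The space of `C¹` real functions on the circle, as a subspace of all functions. -/
def C1Sub : Submodule ℝ (𝕊 → ℝ) where
  carrier := {u | IsC1 u}
  add_mem' := fun hu hv => by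
    simp only [Set.mem_setOf_eq, IsC1] at *
    exact hu.add hv
  zero_mem' := by
    simp only [Set.mem_setOf_eq, IsC1]
    exact contDiff_const
  smul_mem' := fun c u hu => by
    simp only [Set.mem_setOf_eq, IsC1] at *
    exact hu.const_smul c

/-- A (continuous) `1`-distribution on the circle: a linear functional on the space of `C¹`
functions which is bounded with respect to the `C¹` norm. -/
def IsDistribution (L : C1Sub →ₗ[ℝ] ℝ) : Prop :=
  ∃ C : ℝ, ∀ u : C1Sub, |L u| ≤ C * c1Norm (u : 𝕊 → ℝ)

/-- Invariance of a `1`-distribution under a circle diffeomorphism: `L (u ∘ f) = L u`. -/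
def InvariantUnder (f : C1Diffeo) (L : C1Sub →ₗ[ℝ] ℝ) : Prop :=
  ∀ u v : C1Sub, (∀ x, (v : 𝕊 → ℝ) x = (u : 𝕊 → ℝ) (f.toCircle x)) → L v = L u

/-- `K` is a minimal invariant Cantor set for the circle diffeomorphism `f`: a nonempty
perfect totally disconnected invariant set in which every (full) orbit is dense. -/
def IsMinimalInvariantCantor (f : C1Diffeo) (K : Set 𝕊) : Prop :=
  K.Nonempty ∧ Perfect K ∧ IsTotallyDisconnected K ∧
    f.toCircle '' K = K ∧
    ∀ x ∈ K, closure (Set.range fun n : ℤ => f.mapZ n x) = K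

/-- The total mass `S = Σ_{n ∈ ℤ} D(fⁿ)(x₀)` of the derivatives along the orbit of `x₀`. -/
def orbitSum (f : C1Diffeo) (x₀ : 𝕊) : ℝ := ∑' n : ℤ, f.DfZ n x₀

/-- The atomic measure `ν = S⁻¹ Σ_{n ∈ ℤ} D(fⁿ)(x₀) · δ_{fⁿ(x₀)}` on the circle. -/
def orbitMeasure (f : C1Diffeo) (x₀ : 𝕊) : Measure 𝕊 :=
  (ENNReal.ofReal (orbitSum f x₀))⁻¹ •
    Measure.sum fun n : ℤ => ENNReal.ofReal (f.DfZ n x₀) • Measure.dirac (f.mapZ n x₀)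

namespace DenjoyYoccoz

section

/-! ### Lengths of the gaps -/

/-- Unnormalised gap lengths. The constant `100` keeps all consecutive ratios close to `1`. -/
def wt (n : ℤ) : ℝ := 1 / ((n : ℝ) ^ 2 + 100)

lemma wt_pos (n : ℤ) : 0 < wt n := by unfold wt; positivity

lemma summable_wt : Summable wt := by
  have h : Summable fun n : ℤ => 1 / (n : ℝ) ^ 2 :=
    Real.summable_one_div_int_pow.mpr one_lt_two
  refine h.of_norm_bounded_eventually ?_
  filter_upwards [(Set.finite_singleton (0 : ℤ)).compl_mem_cofinite] with n hn
  have hn' : (n : ℝ) ≠ 0 := by exact_mod_cast (show n ≠ 0 from hn)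
  rw [Real.norm_of_nonneg (wt_pos n).le, wt]
  gcongr
  linarith

lemma tsum_wt_pos : 0 < ∑' n, wt n := summable_wt.tsum_pos (fun n => (wt_pos n).le) 0 (wt_pos 0)

/-- The length of the `n`-th gap; the gaps fill one half of the circle. -/
def len (n : ℤ) : ℝ := wt n / (2 * ∑' m, wt m)

lemma len_pos (n : ℤ) : 0 < len n := div_pos (wt_pos n) (by linarith [tsum_wt_pos])

lemma summable_len : Summable len := summable_wt.div_const _

lemma tsum_len : ∑' n, len n = 1 / 2 := by
  unfold len
  rw [tsum_div_const]
  field_simp [tsum_wt_pos.ne']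

lemma len_lt_one (n : ℤ) : len n < 1 := by
  have := summable_len.le_tsum n (fun m _ => (len_pos m).le)
  rw [tsum_len] at this
  linarith

/-- The relative variation of length from the `n`-th gap to the next one. -/
def eps (n : ℤ) : ℝ := len (n + 1) / len n - 1

lemma eps_mul_len (n : ℤ) : eps n * len n = len (n + 1) - len n := by
  have := (len_pos n).ne'
  unfold eps
  field_simp

lemma eps_eq (n : ℤ) : eps n = -(2 * n + 1) / (((n : ℝ) + 1) ^ 2 + 100) := by
  have h1 : 2 * ∑' m, wt m ≠ 0 := (mul_pos two_pos tsum_wt_pos).ne'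
  have h2 : ((n : ℝ) + 1) ^ 2 + 100 ≠ 0 := by positivity
  have h3 : (n : ℝ) ^ 2 + 100 ≠ 0 := by positivity
  rw [eps, len, len, div_div_div_cancel_right₀ h1, wt, wt]
  push_cast
  field_simp
  ring

lemma abs_eps_le (n : ℤ) : |eps n| ≤ 1 / 4 := by
  have h2 : 0 < ((n : ℝ) + 1) ^ 2 + 100 := by positivity
  rw [eps_eq, abs_div, abs_of_pos h2, div_le_iff₀ h2, abs_le]
  constructor <;> nlinarith [sq_nonneg ((n : ℝ) + 5), sq_nonneg ((n : ℝ) - 5)]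

lemma abs_eps_le' (n : ℤ) : |eps n| ≤ 4 / (|(n : ℝ)| + 1) := by
  have h2 : 0 < ((n : ℝ) + 1) ^ 2 + 100 := by positivity
  rw [eps_eq, abs_div, abs_of_pos h2, div_le_div_iff₀ h2 (by positivity), ← abs_of_nonneg
    (show (0 : ℝ) ≤ |(n : ℝ)| + 1 by positivity), ← abs_mul, abs_le]
  rcases abs_cases (n : ℝ) with ⟨h, h'⟩ | ⟨h, h'⟩ <;> rw [h] <;>
  constructor <;> nlinarith [sq_nonneg ((n : ℝ) + 5), sq_nonneg ((n : ℝ) - 5), sq_nonneg (n : ℝ)]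

lemma finite_eps_ge {δ : ℝ} (hδ : 0 < δ) : {n : ℤ | δ ≤ |eps n|}.Finite := by
  refine (Set.finite_Icc (-⌈4 / δ⌉) ⌈4 / δ⌉).subset fun n hn => ?_
  have h1 : δ ≤ 4 / (|(n : ℝ)| + 1) := le_trans hn (abs_eps_le' n)
  rw [le_div_iff₀ (by positivity)] at h1
  have h2 : |(n : ℝ)| ≤ 4 / δ := by rw [le_div_iff₀ hδ]; nlinarith
  have h3 : |(n : ℝ)| ≤ (⌈4 / δ⌉ : ℤ) := h2.trans (Int.le_ceil _)
  rw [abs_le] at h3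
  exact ⟨by exact_mod_cast h3.1, by exact_mod_cast h3.2⟩

/-! ### The bump on a gap -/

/-- The profile of the variation of the derivative on a gap: it vanishes at `0` and `1`,
has integral `1` on `[0, 1]`, and takes the value `1` at the centre of symmetry `1 / 2`. -/
def bump (s : ℝ) : ℝ := 1 - (Real.cos (2 * Real.pi * s) + Real.cos (4 * Real.pi * s)) / 2

lemma continuous_bump : Continuous bump := by unfold bump; fun_prop

lemma bump_zero : bump 0 = 0 := by simp [bump]

lemma bump_one : bump 1 = 0 := by
  have h : Real.cos (4 * Real.pi * 1) = 1 := by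
    rw [show 4 * Real.pi * 1 = 2 * (2 * Real.pi) by ring, Real.cos_two_mul, Real.cos_two_pi]
    norm_num
  simp only [bump, h]
  simp

lemma bump_half : bump (1 / 2) = 1 := by
  rw [bump, show 2 * Real.pi * (1 / 2) = Real.pi by ring,
    show 4 * Real.pi * (1 / 2) = 2 * Real.pi by ring]
  simp

lemma bump_nonneg (s : ℝ) : 0 ≤ bump s := by
  have h1 := Real.cos_le_one (2 * Real.pi * s)
  have h2 := Real.cos_le_one (4 * Real.pi * s)
  unfold bump
  linarith

lemma bump_le (s : ℝ) : bump s ≤ 2 := by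
  have h1 := Real.neg_one_le_cos (2 * Real.pi * s)
  have h2 := Real.neg_one_le_cos (4 * Real.pi * s)
  unfold bump
  linarith

/-- A primitive of `bump`. -/
def bumpPrim (s : ℝ) : ℝ :=
  s - (Real.sin (2 * Real.pi * s) / (2 * Real.pi) + Real.sin (4 * Real.pi * s) / (4 * Real.pi)) / 2

lemma hasDerivAt_bumpPrim (s : ℝ) : HasDerivAt bumpPrim (bump s) s := by
  have h1 : HasDerivAt (fun s : ℝ => 2 * Real.pi * s) (2 * Real.pi) s := by
    simpa using (hasDerivAt_id s).const_mul (2 * Real.pi)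
  have h2 : HasDerivAt (fun s : ℝ => 4 * Real.pi * s) (4 * Real.pi) s := by
    simpa using (hasDerivAt_id s).const_mul (4 * Real.pi)
  have := (hasDerivAt_id s).sub (((h1.sin.div_const (2 * Real.pi)).add
    (h2.sin.div_const (4 * Real.pi))).div_const 2)
  refine this.congr_deriv ?_
  have hpi := Real.pi_ne_zero
  unfold bump
  field_simp

lemma bumpPrim_zero : bumpPrim 0 = 0 := by simp [bumpPrim]

lemma bumpPrim_one : bumpPrim 1 = 1 := by
  have h : Real.sin (4 * Real.pi * 1) = 0 := by
    rw [show 4 * Real.pi * 1 = 2 * (2 * Real.pi) by ring, Real.sin_two_mul, Real.sin_two_pi]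
    norm_num
  simp only [bumpPrim, h]
  simp

lemma bumpPrim_half : bumpPrim (1 / 2) = 1 / 2 := by
  rw [bumpPrim, show 2 * Real.pi * (1 / 2) = Real.pi by ring,
    show 4 * Real.pi * (1 / 2) = 2 * Real.pi by ring]
  simp

/-- The `1`-periodic function supported by `[0, l] + ℤ` and equal to the bump rescaled to
`[0, l]` there (for `0 < l < 1`). -/
def pbump (l y : ℝ) : ℝ := bump (min (Int.fract y / l) 1)

variable {l : ℝ}

lemma pbump_nonneg (y : ℝ) : 0 ≤ pbump l y := bump_nonneg _

lemma pbump_le (y : ℝ) : pbump l y ≤ 2 := bump_le _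

lemma pbump_periodic : Function.Periodic (pbump l) 1 := fun y => by simp [pbump]

lemma continuous_pbump (h0 : 0 < l) (h1 : l < 1) : Continuous (pbump l) := by
  have hc : Continuous fun y : ℝ => bump (min (y / l) 1) :=
    continuous_bump.comp ((continuous_id.div_const l).min continuous_const)
  refine ContinuousOn.comp_fract'' (f := fun y : ℝ => bump (min (y / l) 1)) hc.continuousOn ?_
  have : (1 : ℝ) ≤ 1 / l := by rw [le_div_iff₀ h0]; linarith
  simp only [zero_div, min_eq_right this, bump_one, min_eq_left zero_le_one, bump_zero]

/-- The bump lives strictly inside the translates of `[0, l]`. -/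
lemma fract_of_pbump_ne_zero (h0 : 0 < l) {y : ℝ} (h : pbump l y ≠ 0) :
    0 < Int.fract y ∧ Int.fract y < l := by
  constructor
  · refine lt_of_le_of_ne (Int.fract_nonneg y) fun h' => h ?_
    simp [pbump, ← h', bump_zero]
  · by_contra! h'
    have : (1 : ℝ) ≤ Int.fract y / l := by rw [le_div_iff₀ h0]; linarith
    exact h (by rw [pbump, min_eq_right this, bump_one])

lemma pbump_half (h0 : 0 < l) (h1 : l < 1) : pbump l (l / 2) = 1 := by
  have h : Int.fract (l / 2) = l / 2 := Int.fract_eq_self.mpr ⟨by linarith, by linarith⟩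
  rw [pbump, h, show l / 2 / l = 1 / 2 by field_simp, min_eq_left (by norm_num), bump_half]

/-- The primitive of `pbump l` vanishing at `0`. -/
def prim (l y : ℝ) : ℝ := ∫ u in (0 : ℝ)..y, pbump l u

lemma hasDerivAt_prim (h0 : 0 < l) (h1 : l < 1) (y : ℝ) :
    HasDerivAt (prim l) (pbump l y) y :=
  intervalIntegral.integral_hasDerivAt_right ((continuous_pbump h0 h1).intervalIntegrable _ _)
    (continuous_pbump h0 h1).stronglyMeasurable.stronglyMeasurableAtFilter
    (continuous_pbump h0 h1).continuousAt

lemma prim_mono (h0 : 0 < l) (h1 : l < 1) : Monotone (prim l) :=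
  monotone_of_hasDerivAt_nonneg (hasDerivAt_prim h0 h1) fun y => pbump_nonneg y

lemma prim_zero : prim l 0 = 0 := by simp [prim]

lemma prim_eq_of_mem (h0 : 0 < l) (h1 : l < 1) {y : ℝ} (hy0 : 0 ≤ y) (hy : y ≤ l) :
    prim l y = l * bumpPrim (y / l) := by
  have h : prim l y = ∫ u in (0 : ℝ)..y, bump (u / l) := by
    refine intervalIntegral.integral_congr fun u hu => ?_
    rw [uIcc_of_le hy0] at hu
    have hf : Int.fract u = u := Int.fract_eq_self.mpr ⟨hu.1, by linarith [hu.2]⟩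
    have hle : u / l ≤ 1 := by rw [div_le_one h0]; linarith [hu.2]
    simp only [pbump, hf, min_eq_left hle]
  have hd : ∀ u ∈ uIcc 0 y, HasDerivAt (fun u => l * bumpPrim (u / l)) (bump (u / l)) u := by
    intro u _
    have := ((hasDerivAt_bumpPrim (u / l)).comp u ((hasDerivAt_id u).div_const l)).const_mul l
    refine this.congr_deriv ?_
    field_simp
  rw [h, intervalIntegral.integral_eq_sub_of_hasDerivAt hd
    ((continuous_bump.comp (continuous_id.div_const l)).intervalIntegrable _ _)]
  simp [bumpPrim_zero]

lemma prim_self (h0 : 0 < l) (h1 : l < 1) : prim l l = l := by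
  rw [prim_eq_of_mem h0 h1 h0.le le_rfl, div_self h0.ne', bumpPrim_one, mul_one]

lemma prim_half (h0 : 0 < l) (h1 : l < 1) : prim l (l / 2) = l / 2 := by
  rw [prim_eq_of_mem h0 h1 (by linarith) (by linarith), show l / 2 / l = 1 / 2 by field_simp,
    bumpPrim_half]
  ring

/-- On `[l, 1]` the primitive is constant, since the bump vanishes there. -/
lemma prim_eq_of_ge (h0 : 0 < l) (h1 : l < 1) {y : ℝ} (hy : l ≤ y) (hy1 : y ≤ 1) :
    prim l y = l := by
  have hi := fun a b => (continuous_pbump h0 h1).intervalIntegrable (μ := volume) a b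
  have h : ∫ u in l..y, pbump l u = 0 := by
    rw [intervalIntegral.integral_congr (g := fun _ => (0 : ℝ)), intervalIntegral.integral_zero]
    intro u hu
    rw [uIcc_of_le hy] at hu
    by_contra hne
    obtain ⟨ha, hb⟩ := fract_of_pbump_ne_zero h0 hne
    rcases lt_or_eq_of_le (hu.2.trans hy1) with h' | h'
    · rw [Int.fract_eq_self.mpr ⟨by linarith [hu.1], h'⟩] at hb
      linarith [hu.1]
    · simp [h'] at ha
  rw [prim, ← intervalIntegral.integral_add_adjacent_intervals (hi 0 l) (hi l y), h, add_zero]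
  exact prim_self h0 h1

lemma prim_add_int (h0 : 0 < l) (h1 : l < 1) (y : ℝ) (k : ℤ) :
    prim l (y + k) = prim l y + k * l := by
  have hp := (pbump_periodic (l := l)).intervalIntegral_add_zsmul_eq k y
    (fun a b => (continuous_pbump h0 h1).intervalIntegrable a b)
  have hi := fun a b => (continuous_pbump h0 h1).intervalIntegrable (μ := volume) a b
  have hone : ∫ u in (0 : ℝ)..1, pbump l u = l := prim_eq_of_ge h0 h1 h1.le le_rfl
  have hper := (pbump_periodic (l := l)).intervalIntegral_add_eq y 0
  rw [zero_add] at hper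
  rw [hper, hone] at hp
  rw [prim, ← intervalIntegral.integral_add_adjacent_intervals (hi 0 y) (hi y (y + k)), prim]
  simp only [zsmul_eq_mul, mul_one] at hp
  rw [hp]

lemma prim_int (h0 : 0 < l) (h1 : l < 1) (k : ℤ) : prim l k = k * l := by
  simpa [prim_zero] using prim_add_int h0 h1 0 k

/-- On a component of the complement of `[0, l] + ℤ` the primitive is constant. -/
lemma prim_eq_of_between (h0 : 0 < l) (h1 : l < 1) {y : ℝ} {k : ℤ} (hy : k + l ≤ y)
    (hy1 : y ≤ k + 1) : prim l y = (k + 1) * l := by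
  have := prim_add_int h0 h1 (y - k) k
  rw [sub_add_cancel, prim_eq_of_ge h0 h1 (y := y - k) (by linarith) (by linarith)] at this
  rw [this]; ring

lemma abs_prim_le (h0 : 0 < l) (h1 : l < 1) (y : ℝ) : |prim l y| ≤ l * (|y| + 1) := by
  have ha := prim_mono h0 h1 (Int.floor_le y)
  have hb := prim_mono h0 h1 (Int.le_ceil y)
  rw [prim_int h0 h1] at ha hb
  have hc := Int.lt_floor_add_one y
  have hd := Int.ceil_lt_add_one y
  rw [abs_le]
  constructor
  · nlinarith [neg_abs_le y]
  · nlinarith [le_abs_self y]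

end

section

/-! ### Blowing up an orbit of the rotation -/

/-- The representative in `[0, 1)` of the `n`-th point of the orbit of `0` under the rotation. -/
def ang (ρ : ℝ) (n : ℤ) : ℝ := Int.fract (n * ρ)

/-- The left end of the interval into which the point `t` is blown up: half of Lebesgue measure
plus the lengths of the gaps over the orbit points in `[0, t)`, extended to `ℝ` so as to
commute with the unit translation. -/
def Hm (ρ t : ℝ) : ℝ := t / 2 + ∑' n, len n * (⌈t - ang ρ n⌉ : ℝ)

/-- The right end of the interval into which the point `t` is blown up. -/
def Hp (ρ t : ℝ) : ℝ := t / 2 + ∑' n, len n * ((⌊t - ang ρ n⌋ : ℝ) + 1)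

variable {ρ : ℝ}

lemma ang_nonneg (n : ℤ) : 0 ≤ ang ρ n := Int.fract_nonneg _

lemma ang_lt_one (n : ℤ) : ang ρ n < 1 := Int.fract_lt_one _

lemma ang_zero : ang ρ 0 = 0 := by simp [ang]

lemma ang_add_floor (n : ℤ) : ang ρ n + ⌊(n : ℝ) * ρ⌋ = n * ρ := Int.fract_add_floor _

lemma ang_succ (n : ℤ) : ang ρ (n + 1) = ang ρ n + ρ - ⌊ang ρ n + ρ⌋ := by
  have h : (((n + 1 : ℤ) : ℝ)) * ρ = ang ρ n + ρ + ⌊(n : ℝ) * ρ⌋ := by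
    push_cast
    linarith [ang_add_floor (ρ := ρ) n]
  rw [ang, h, Int.fract_add_intCast]
  rfl

/-- Distinct points of the orbit of `0` are distinct on the circle, by irrationality. -/
lemma ang_inj (hρ : Irrational ρ) {m n j k : ℤ} (h : ang ρ m + j = ang ρ n + k) : m = n := by
  by_contra hmn
  have h1 := ang_add_floor (ρ := ρ) m
  have h2 := ang_add_floor (ρ := ρ) n
  have h3 : ((m - n : ℤ) : ℝ) * ρ = (⌊(m : ℝ) * ρ⌋ - ⌊(n : ℝ) * ρ⌋ + k - j : ℤ) := by
    push_cast
    linarith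
  exact (hρ.intCast_mul (sub_ne_zero.mpr hmn)).ne_int _ h3

lemma abs_ceil_le (t : ℝ) (n : ℤ) : |(⌈t - ang ρ n⌉ : ℝ)| ≤ |t| + 2 := by
  have h1 := Int.le_ceil (t - ang ρ n)
  have h2 := Int.ceil_lt_add_one (t - ang ρ n)
  have h3 := ang_nonneg (ρ := ρ) n
  have h4 := ang_lt_one (ρ := ρ) n
  rw [abs_le]
  constructor <;> linarith [neg_abs_le t, le_abs_self t]

lemma abs_floor_le (t : ℝ) (n : ℤ) : |(⌊t - ang ρ n⌋ : ℝ) + 1| ≤ |t| + 2 := by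
  have h1 := Int.floor_le (t - ang ρ n)
  have h2 := Int.lt_floor_add_one (t - ang ρ n)
  have h3 := ang_nonneg (ρ := ρ) n
  have h4 := ang_lt_one (ρ := ρ) n
  rw [abs_le]
  constructor <;> linarith [neg_abs_le t, le_abs_self t]

lemma summable_of_bdd {u v : ℤ → ℝ} {C : ℝ} (hu : Summable u) (hu0 : ∀ n, 0 ≤ u n)
    (hv : ∀ n, |v n| ≤ C) : Summable fun n => u n * v n := by
  refine (hu.mul_right C).of_norm_bounded fun n => ?_
  rw [Real.norm_eq_abs, abs_mul, abs_of_nonneg (hu0 n)]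
  exact mul_le_mul_of_nonneg_left (hv n) (hu0 n)

lemma summable_ceil (t : ℝ) : Summable fun n => len n * (⌈t - ang ρ n⌉ : ℝ) :=
  summable_of_bdd summable_len (fun n => (len_pos n).le) (abs_ceil_le t)

lemma summable_floor (t : ℝ) : Summable fun n => len n * ((⌊t - ang ρ n⌋ : ℝ) + 1) :=
  summable_of_bdd summable_len (fun n => (len_pos n).le) (abs_floor_le t)

lemma Hm_zero : Hm ρ 0 = 0 := by
  have h : ∀ n, ⌈0 - ang ρ n⌉ = 0 := fun n => by
    rw [Int.ceil_eq_iff]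
    have h3 := ang_nonneg (ρ := ρ) n
    have h4 := ang_lt_one (ρ := ρ) n
    constructor <;> push_cast <;> linarith
  simp only [Hm, h]
  simp

lemma Hm_add_int (t : ℝ) (k : ℤ) : Hm ρ (t + k) = Hm ρ t + k := by
  have h : ∀ n, len n * (⌈t + k - ang ρ n⌉ : ℝ) = len n * (⌈t - ang ρ n⌉ : ℝ) + len n * k := by
    intro n
    rw [show t + k - ang ρ n = t - ang ρ n + k by ring, Int.ceil_add_intCast]
    push_cast
    ring
  simp only [Hm, h]
  rw [(summable_ceil t).tsum_add (summable_len.mul_right _), tsum_mul_right, tsum_len]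
  ring

lemma Hp_add_int (t : ℝ) (k : ℤ) : Hp ρ (t + k) = Hp ρ t + k := by
  have h : ∀ n, len n * ((⌊t + k - ang ρ n⌋ : ℝ) + 1)
      = len n * ((⌊t - ang ρ n⌋ : ℝ) + 1) + len n * k := by
    intro n
    rw [show t + k - ang ρ n = t - ang ρ n + k by ring, Int.floor_add_intCast]
    push_cast
    ring
  simp only [Hp, h]
  rw [(summable_floor t).tsum_add (summable_len.mul_right _), tsum_mul_right, tsum_len]
  ring

lemma Hm_le_Hp (t : ℝ) : Hm ρ t ≤ Hp ρ t := by
  have := (summable_ceil (ρ := ρ) t).tsum_le_tsum (fun n => mul_le_mul_of_nonneg_left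
    (by exact_mod_cast Int.ceil_le_floor_add_one (t - ang ρ n)) (len_pos n).le) (summable_floor t)
  unfold Hm Hp
  linarith

lemma Hp_lt_Hm {s t : ℝ} (h : s < t) : Hp ρ s < Hm ρ t := by
  have := (summable_floor (ρ := ρ) s).tsum_le_tsum (fun n => mul_le_mul_of_nonneg_left
    (c := (⌈t - ang ρ n⌉ : ℝ)) (by
      have h1 := Int.floor_le (s - ang ρ n)
      have h2 := Int.le_ceil (t - ang ρ n)
      have : ((⌊s - ang ρ n⌋ : ℤ) : ℝ) < (⌈t - ang ρ n⌉ : ℤ) := by linarith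
      exact_mod_cast Int.add_one_le_iff.mpr (Int.cast_lt.mp this)) (len_pos n).le)
    (summable_ceil t)
  unfold Hm Hp
  linarith

lemma Hm_strictMono : StrictMono (Hm ρ) := fun s _ h => (Hm_le_Hp s).trans_lt (Hp_lt_Hm h)

lemma Hp_strictMono : StrictMono (Hp ρ) := fun _ t h => (Hp_lt_Hm h).trans_le (Hm_le_Hp t)

lemma ceil_eq_floor_add_one {x : ℝ} (h : ∀ k : ℤ, x ≠ k) : (⌈x⌉ : ℝ) = ⌊x⌋ + 1 := by
  have : ⌈x⌉ = ⌊x⌋ + 1 := by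
    rw [Int.ceil_eq_iff]
    push_cast
    exact ⟨by linarith [lt_of_le_of_ne (Int.floor_le x) (h _).symm], (Int.lt_floor_add_one x).le⟩
  exact_mod_cast this

/-- Points outside the orbit of `0` are not blown up. -/
lemma Hp_eq_Hm {t : ℝ} (h : ∀ (n k : ℤ), t ≠ ang ρ n + k) : Hp ρ t = Hm ρ t := by
  unfold Hm Hp
  congr 2
  funext n
  rw [ceil_eq_floor_add_one fun k hk => h n k (by linarith)]

/-- The `n`-th point of the orbit of `0` is blown up into an interval of length `len n`. -/
lemma Hp_ang (hρ : Irrational ρ) (n k : ℤ) :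
    Hp ρ (ang ρ n + k) = Hm ρ (ang ρ n + k) + len n := by
  have h : ∑' m, (len m * ((⌊ang ρ n + k - ang ρ m⌋ : ℝ) + 1)
      - len m * (⌈ang ρ n + k - ang ρ m⌉ : ℝ)) = len n := by
    rw [tsum_eq_single n]
    · rw [show ang ρ n + k - ang ρ n = ((k : ℤ) : ℝ) by ring, Int.floor_intCast, Int.ceil_intCast]
      ring
    · intro m hm
      rw [ceil_eq_floor_add_one fun j hj => hm (ang_inj (j := j) (k := k) hρ (by linarith)),
        sub_self]
  rw [(summable_floor _).tsum_sub (summable_ceil _)] at h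
  unfold Hm Hp
  linarith

lemma tendsto_Hm_right (t : ℝ) : Tendsto (Hm ρ) (𝓝[>] t) (𝓝 (Hp ρ t)) := by
  have hid : Tendsto (fun s : ℝ => s / 2) (𝓝[>] t) (𝓝 (t / 2)) :=
    ((continuous_id.div_const 2).tendsto t).mono_left nhdsWithin_le_nhds
  refine hid.add (tendsto_tsum_of_dominated_convergence
    (bound := fun n => len n * (|t| + 3)) (summable_len.mul_right _) (fun n => ?_) ?_)
  · refine tendsto_const_nhds.congr' ?_
    have hlt : t < ⌊t - ang ρ n⌋ + 1 + ang ρ n := by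
      linarith [Int.lt_floor_add_one (t - ang ρ n)]
    filter_upwards [Ioo_mem_nhdsGT hlt] with s hs
    have : ⌈s - ang ρ n⌉ = ⌊t - ang ρ n⌋ + 1 := by
      rw [Int.ceil_eq_iff]
      push_cast
      exact ⟨by linarith [Int.floor_le (t - ang ρ n), hs.1], by linarith [hs.2]⟩
    rw [this]
    push_cast
    rfl
  · filter_upwards [Ioo_mem_nhdsGT (show t < t + 1 by linarith)] with s hs n
    rw [norm_mul, Real.norm_of_nonneg (len_pos n).le]
    refine mul_le_mul_of_nonneg_left ((abs_ceil_le s n).trans ?_) (len_pos n).le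
    have : |s| ≤ |t| + |s - t| := by simpa using abs_add_le t (s - t)
    rw [abs_of_pos (show 0 < s - t by linarith [hs.1])] at this
    linarith [hs.2]

lemma tendsto_Hp_left (t : ℝ) : Tendsto (Hp ρ) (𝓝[<] t) (𝓝 (Hm ρ t)) := by
  have hid : Tendsto (fun s : ℝ => s / 2) (𝓝[<] t) (𝓝 (t / 2)) :=
    ((continuous_id.div_const 2).tendsto t).mono_left nhdsWithin_le_nhds
  refine hid.add (tendsto_tsum_of_dominated_convergence
    (bound := fun n => len n * (|t| + 3)) (summable_len.mul_right _) (fun n => ?_) ?_)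
  · refine tendsto_const_nhds.congr' ?_
    have hlt : (⌈t - ang ρ n⌉ : ℝ) - 1 + ang ρ n < t := by
      linarith [Int.ceil_lt_add_one (t - ang ρ n)]
    filter_upwards [Ioo_mem_nhdsLT hlt] with s hs
    have : ⌊s - ang ρ n⌋ = ⌈t - ang ρ n⌉ - 1 := by
      rw [Int.floor_eq_iff]
      push_cast
      exact ⟨by linarith [hs.1], by linarith [Int.le_ceil (t - ang ρ n), hs.2]⟩
    rw [this]
    push_cast
    ring
  · filter_upwards [Ioo_mem_nhdsLT (show t - 1 < t by linarith)] with s hs n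
    rw [norm_mul, Real.norm_of_nonneg (len_pos n).le]
    refine mul_le_mul_of_nonneg_left ((abs_floor_le s n).trans ?_) (len_pos n).le
    have : |s| ≤ |t| + |s - t| := by simpa using abs_add_le t (s - t)
    rw [abs_of_neg (show s - t < 0 by linarith [hs.2])] at this
    linarith [hs.1]

lemma exists_Hm_lt {t y : ℝ} (h : Hp ρ t < y) : ∃ s, t < s ∧ Hm ρ s < y := by
  obtain ⟨s, hs, hts⟩ := (((tendsto_Hm_right (ρ := ρ) t).eventually_lt_const h).and
    self_mem_nhdsWithin).exists
  exact ⟨s, hts, hs⟩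

lemma exists_lt_Hp {t y : ℝ} (h : y < Hm ρ t) : ∃ s, s < t ∧ y < Hp ρ s := by
  obtain ⟨s, hs, hts⟩ := (((tendsto_Hp_left (ρ := ρ) t).eventually_const_lt h).and
    self_mem_nhdsWithin).exists
  exact ⟨s, hts, hs⟩

/-- The intervals `[Hm ρ t, Hp ρ t]` cover the line; they are disjoint by `Hp_lt_Hm`. -/
lemma exists_mem_Icc (x : ℝ) : ∃ t, Hm ρ t ≤ x ∧ x ≤ Hp ρ t := by
  have hint : ∀ k : ℤ, Hm ρ k = k := fun k => by simpa [Hm_zero] using Hm_add_int (ρ := ρ) 0 k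
  have hne : {t | Hm ρ t ≤ x}.Nonempty := ⟨⌊x⌋, by
    rw [Set.mem_ofPred_eq, hint]; exact Int.floor_le x⟩
  have hbdd : BddAbove {t | Hm ρ t ≤ x} := ⟨⌈x⌉, fun t ht => by
    by_contra! hlt
    have := Hm_strictMono (ρ := ρ) hlt
    rw [hint] at this
    exact absurd (Int.le_ceil x) (not_le.mpr (this.trans_le ht))⟩
  refine ⟨sSup {t | Hm ρ t ≤ x}, ?_, ?_⟩
  · by_contra! h
    obtain ⟨s, hs, hx⟩ := exists_lt_Hp h
    obtain ⟨u, hu, hsu⟩ := exists_lt_of_lt_csSup hne hs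
    exact absurd (hx.trans (Hp_lt_Hm hsu)) (not_lt.mpr hu)
  · by_contra! h
    obtain ⟨s, hs, hx⟩ := exists_Hm_lt h
    exact absurd (le_csSup hbdd (show s ∈ {t | Hm ρ t ≤ x} from hx.le)) (not_le.mpr hs)

lemma eq_of_mem_Icc {x s t : ℝ} (h1 : Hm ρ s ≤ x) (h2 : x ≤ Hp ρ s) (h3 : Hm ρ t ≤ x)
    (h4 : x ≤ Hp ρ t) : s = t := by
  rcases lt_trichotomy s t with h | h | h
  · linarith [Hp_lt_Hm (ρ := ρ) h]
  · exact h
  · linarith [Hp_lt_Hm (ρ := ρ) h]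

end

section

variable {ρ : ℝ}

/-! ### The lift of the counter-example -/

/-- The left end of the gap over `ang ρ n`. -/
def gap (ρ : ℝ) (n : ℤ) : ℝ := Hm ρ (ang ρ n)

/-- The contribution of the `n`-th gap to the derivative. -/
def dterm (ρ : ℝ) (n : ℤ) (x : ℝ) : ℝ := eps n * pbump (len n) (x - gap ρ n)

/-- The contribution of the `n`-th gap to the lift, a primitive of `dterm ρ n`. -/
def term (ρ : ℝ) (n : ℤ) (x : ℝ) : ℝ := eps n * prim (len n) (x - gap ρ n)

/-- The derivative of the lift: `1` off the gaps, and `1` plus `eps n` times a rescaled bump on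
the `n`-th gap. -/
def dlift (ρ x : ℝ) : ℝ := 1 + ∑' n, dterm ρ n x

/-- The lift of the counter-example; the constant is chosen so that `0 = Hm ρ 0` is sent
to `Hm ρ ρ`. -/
def lift (ρ x : ℝ) : ℝ := x + Hm ρ ρ + ∑' n, term ρ n x

lemma Hm_ang_add (n k : ℤ) : Hm ρ (ang ρ n + k) = gap ρ n + k := Hm_add_int _ _

lemma Hp_ang_add (hρ : Irrational ρ) (n k : ℤ) : Hp ρ (ang ρ n + k) = gap ρ n + k + len n := by
  rw [Hp_ang hρ, Hm_ang_add]

lemma prim_Hm (hρ : Irrational ρ) (t : ℝ) (n : ℤ) :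
    prim (len n) (Hm ρ t - gap ρ n) = len n * (⌈t - ang ρ n⌉ : ℝ) := by
  have h1 : ang ρ n + ((⌈t - ang ρ n⌉ - 1 : ℤ) : ℝ) < t := by
    push_cast; linarith [Int.ceil_lt_add_one (t - ang ρ n)]
  have h2 : t ≤ ang ρ n + (⌈t - ang ρ n⌉ : ℤ) := by linarith [Int.le_ceil (t - ang ρ n)]
  have h3 := Hp_lt_Hm (ρ := ρ) h1
  have h4 := Hm_strictMono.monotone (f := Hm ρ) h2
  rw [Hp_ang_add hρ] at h3
  rw [Hm_ang_add] at h4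
  rw [prim_eq_of_between (len_pos n) (len_lt_one n) (k := ⌈t - ang ρ n⌉ - 1)
    (by linarith) (by push_cast; linarith)]
  push_cast
  ring

lemma prim_Hp (hρ : Irrational ρ) (t : ℝ) (n : ℤ) :
    prim (len n) (Hp ρ t - gap ρ n) = len n * ((⌊t - ang ρ n⌋ : ℝ) + 1) := by
  have h1 : ang ρ n + (⌊t - ang ρ n⌋ : ℤ) ≤ t := by linarith [Int.floor_le (t - ang ρ n)]
  have h2 : t < ang ρ n + ((⌊t - ang ρ n⌋ + 1 : ℤ) : ℝ) := by
    push_cast; linarith [Int.lt_floor_add_one (t - ang ρ n)]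
  have h3 := Hp_strictMono.monotone (f := Hp ρ) h1
  have h4 := Hp_lt_Hm (ρ := ρ) h2
  rw [Hp_ang_add hρ] at h3
  rw [Hm_ang_add] at h4
  push_cast at h4
  rw [prim_eq_of_between (len_pos n) (len_lt_one n) (k := ⌊t - ang ρ n⌋)
    (by linarith) (by linarith)]
  ring

lemma summable_len_succ : Summable fun n => len (n + 1) :=
  (Equiv.addRight (1 : ℤ)).summable_iff.mpr summable_len

lemma tsum_shift (u : ℤ → ℝ) : ∑' n, u (n + 1) = ∑' n, u n := (Equiv.addRight (1 : ℤ)).tsum_eq u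

lemma Hm_add_rho (t : ℝ) : Hm ρ (t + ρ) = (t + ρ) / 2
    + ∑' n, len (n + 1) * ((⌈t - ang ρ n⌉ : ℝ) + ⌊ang ρ n + ρ⌋) := by
  rw [Hm, ← tsum_shift]
  congr 2
  funext n
  rw [ang_succ, show t + ρ - (ang ρ n + ρ - ⌊ang ρ n + ρ⌋) = t - ang ρ n + ⌊ang ρ n + ρ⌋ by ring,
    Int.ceil_add_intCast]
  push_cast
  rfl

lemma Hp_add_rho (t : ℝ) : Hp ρ (t + ρ) = (t + ρ) / 2
    + ∑' n, len (n + 1) * ((⌊t - ang ρ n⌋ : ℝ) + 1 + ⌊ang ρ n + ρ⌋) := by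
  rw [Hp, ← tsum_shift]
  congr 2
  funext n
  rw [ang_succ, show t + ρ - (ang ρ n + ρ - ⌊ang ρ n + ρ⌋) = t - ang ρ n + ⌊ang ρ n + ρ⌋ by ring,
    Int.floor_add_intCast]
  push_cast
  ring

lemma Hm_rho : Hm ρ ρ = ρ / 2 + ∑' n, len (n + 1) * (⌊ang ρ n + ρ⌋ : ℝ) := by
  have h := Hm_add_rho (ρ := ρ) 0
  have h0 : ∀ n, ⌈0 - ang ρ n⌉ = 0 := fun n => by
    rw [Int.ceil_eq_iff]
    have h3 := ang_nonneg (ρ := ρ) n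
    have h4 := ang_lt_one (ρ := ρ) n
    constructor <;> push_cast <;> linarith
  simp only [h0] at h
  simpa using h

lemma summable_floor_rho : Summable fun n => len (n + 1) * (⌊ang ρ n + ρ⌋ : ℝ) := by
  refine summable_of_bdd summable_len_succ (fun n => (len_pos _).le) (C := |ρ| + 2) fun n => ?_
  have h1 := Int.floor_le (ang ρ n + ρ)
  have h2 := Int.lt_floor_add_one (ang ρ n + ρ)
  have h3 := ang_nonneg (ρ := ρ) n
  have h4 := ang_lt_one (ρ := ρ) n
  rw [abs_le]
  constructor <;> linarith [neg_abs_le ρ, le_abs_self ρ]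

/-- The lift maps the left end of the interval over `t` to that of the interval over `t + ρ`,
because each gap length `len n` gets multiplied by `1 + eps n = len (n + 1) / len n`. -/
lemma lift_Hm (hρ : Irrational ρ) (t : ℝ) : lift ρ (Hm ρ t) = Hm ρ (t + ρ) := by
  have h : ∀ n, term ρ n (Hm ρ t)
      = len (n + 1) * (⌈t - ang ρ n⌉ : ℝ) - len n * (⌈t - ang ρ n⌉ : ℝ) := fun n => by
    rw [term, prim_Hm hρ, ← mul_assoc, eps_mul_len]
    ring
  have hs : Summable fun n => len (n + 1) * (⌈t - ang ρ n⌉ : ℝ) :=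
    summable_of_bdd summable_len_succ (fun n => (len_pos _).le) (abs_ceil_le t)
  rw [lift, Hm_rho, Hm_add_rho]
  simp only [h, mul_add]
  rw [hs.tsum_sub (summable_ceil t), hs.tsum_add summable_floor_rho, Hm]
  ring

lemma lift_Hp (hρ : Irrational ρ) (t : ℝ) : lift ρ (Hp ρ t) = Hp ρ (t + ρ) := by
  have h : ∀ n, term ρ n (Hp ρ t) = len (n + 1) * ((⌊t - ang ρ n⌋ : ℝ) + 1)
      - len n * ((⌊t - ang ρ n⌋ : ℝ) + 1) := fun n => by
    rw [term, prim_Hp hρ, ← mul_assoc, eps_mul_len]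
    ring
  have hs : Summable fun n => len (n + 1) * ((⌊t - ang ρ n⌋ : ℝ) + 1) :=
    summable_of_bdd summable_len_succ (fun n => (len_pos _).le) (abs_floor_le t)
  rw [lift, Hm_rho, Hp_add_rho]
  simp only [h, mul_add (len (_ + 1)) (_ + 1) _]
  rw [hs.tsum_sub (summable_floor t), hs.tsum_add summable_floor_rho, Hp]
  ring

lemma gap_mem (n : ℤ) : |gap ρ n| ≤ 1 := by
  have h1 := Hm_strictMono.monotone (f := Hm ρ) (ang_nonneg (ρ := ρ) n)
  have h2 := Hm_strictMono.monotone (f := Hm ρ) (ang_lt_one (ρ := ρ) n).le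
  have h3 : Hm ρ 1 = 1 := by simpa [Hm_zero] using Hm_add_int (ρ := ρ) 0 1
  rw [Hm_zero] at h1
  rw [h3] at h2
  rw [gap, abs_le]
  exact ⟨by linarith, h2⟩

lemma summable_term (x : ℝ) : Summable fun n => term ρ n x := by
  refine (summable_len.mul_right (|x| + 2)).of_norm_bounded fun n => ?_
  have h1 := abs_prim_le (len_pos n) (len_lt_one n) (x - gap ρ n)
  have h2 : |x - gap ρ n| ≤ |x| + 1 := (abs_sub _ _).trans (by linarith [gap_mem (ρ := ρ) n])
  have h3 := abs_eps_le n
  have h4 := len_pos n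
  rw [Real.norm_eq_abs, term, abs_mul]
  calc |eps n| * |prim (len n) (x - gap ρ n)|
      ≤ 1 * (len n * (|x| + 2)) := by
        refine mul_le_mul (by linarith) (h1.trans ?_) (abs_nonneg _) zero_le_one
        exact mul_le_mul_of_nonneg_left (by linarith) h4.le
    _ = len n * (|x| + 2) := one_mul _

lemma lift_add_one (x : ℝ) : lift ρ (x + 1) = lift ρ x + 1 := by
  have h : ∀ n, term ρ n (x + 1) = term ρ n x + (len (n + 1) - len n) := fun n => by
    have := prim_add_int (len_pos n) (len_lt_one n) (x - gap ρ n) 1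
    rw [← eps_mul_len, term, term, show x + 1 - gap ρ n = x - gap ρ n + (1 : ℤ) by push_cast; ring,
      this]
    push_cast
    ring
  simp only [lift, h]
  rw [(summable_term x).tsum_add (summable_len_succ.sub summable_len),
    summable_len_succ.tsum_sub summable_len, tsum_shift len]
  ring

/-- A nonzero contribution of the `n`-th gap at `x` means that `x` is in a translate of it. -/
lemma exists_of_dterm_ne_zero (hρ : Irrational ρ) {n : ℤ} {x : ℝ} (h : dterm ρ n x ≠ 0) :
    ∃ k : ℤ, Hm ρ (ang ρ n + k) ≤ x ∧ x ≤ Hp ρ (ang ρ n + k) := by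
  obtain ⟨h1, h2⟩ := fract_of_pbump_ne_zero (len_pos n) (right_ne_zero_of_mul h)
  refine ⟨⌊x - gap ρ n⌋, ?_⟩
  rw [Hm_ang_add, Hp_ang_add hρ]
  unfold Int.fract at h1 h2
  constructor <;> linarith

/-- The gaps are disjoint, so at each point at most one of them contributes. -/
lemma dterm_unique (hρ : Irrational ρ) {m n : ℤ} {x : ℝ} (hm : dterm ρ m x ≠ 0)
    (hn : dterm ρ n x ≠ 0) : m = n := by
  obtain ⟨j, h1, h2⟩ := exists_of_dterm_ne_zero hρ hm
  obtain ⟨k, h3, h4⟩ := exists_of_dterm_ne_zero hρ hn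
  exact ang_inj hρ (eq_of_mem_Icc h1 h2 h3 h4)

lemma abs_dterm_le (n : ℤ) (x : ℝ) : |dterm ρ n x| ≤ 2 * |eps n| := by
  rw [dterm, abs_mul, abs_of_nonneg (pbump_nonneg _), mul_comm]
  exact mul_le_mul_of_nonneg_right (pbump_le _) (abs_nonneg _)

/-- The partial sums of the derivative converge uniformly although the series of sup norms
diverges: the supports are disjoint and the sup norms tend to `0`. -/
lemma tendstoUniformly_dlift (hρ : Irrational ρ) :
    TendstoUniformly (fun (s : Finset ℤ) x => 1 + ∑ n ∈ s, dterm ρ n x) (dlift ρ) atTop := by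
  rw [Metric.tendstoUniformly_iff]
  intro δ hδ
  have hfin := finite_eps_ge (show 0 < δ / 2 by linarith)
  filter_upwards [eventually_ge_atTop hfin.toFinset] with s hs x
  rw [dlift, Real.dist_eq, add_sub_add_left_eq_sub]
  by_cases h : ∃ m, dterm ρ m x ≠ 0
  · obtain ⟨m, hm⟩ := h
    have h0 : ∀ n, n ≠ m → dterm ρ n x = 0 := fun n hn => by
      by_contra h'
      exact hn (dterm_unique hρ h' hm)
    rw [tsum_eq_single m h0]
    by_cases hms : m ∈ s
    · rw [Finset.sum_eq_single m (fun n _ hn => h0 n hn) (fun h' => absurd hms h')]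
      simpa using hδ
    · rw [Finset.sum_eq_zero fun n hn => h0 n fun h' => hms (h' ▸ hn), sub_zero]
      have : ¬ δ / 2 ≤ |eps m| := fun h' => hms (hs (by simpa using h'))
      linarith [abs_dterm_le (ρ := ρ) m x]
  · push Not at h
    simpa [h] using hδ

lemma continuous_dterm (n : ℤ) : Continuous (dterm ρ n) :=
  continuous_const.mul ((continuous_pbump (len_pos n) (len_lt_one n)).comp
    (continuous_id.sub continuous_const))

lemma continuous_dlift (hρ : Irrational ρ) : Continuous (dlift ρ) :=
  (tendstoUniformly_dlift hρ).continuous (Frequently.of_forall fun s =>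
    continuous_const.add (continuous_finsetSum s fun n _ => continuous_dterm n))

lemma hasDerivAt_term (n : ℤ) (x : ℝ) : HasDerivAt (term ρ n) (dterm ρ n x) x :=
  ((hasDerivAt_prim (len_pos n) (len_lt_one n) _).comp_sub_const x (gap ρ n)).const_mul _

lemma hasDerivAt_lift (hρ : Irrational ρ) (x : ℝ) : HasDerivAt (lift ρ) (dlift ρ x) x := by
  refine hasDerivAt_of_tendstoUniformly
    (f := fun (s : Finset ℤ) x => x + Hm ρ ρ + ∑ n ∈ s, term ρ n x)
    (tendstoUniformly_dlift hρ) (Eventually.of_forall fun s x => ?_) (fun x => ?_) x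
  · exact ((hasDerivAt_id x).add_const _).add (HasDerivAt.fun_sum fun n _ => hasDerivAt_term n x)
  · exact tendsto_const_nhds.add (summable_term x).hasSum

lemma dlift_pos (hρ : Irrational ρ) (x : ℝ) : 0 < dlift ρ x := by
  rw [dlift]
  by_cases h : ∃ m, dterm ρ m x ≠ 0
  · obtain ⟨m, hm⟩ := h
    rw [tsum_eq_single m fun n hn => by_contra fun h' => hn (dterm_unique hρ h' hm)]
    have h1 := abs_dterm_le (ρ := ρ) m x
    have h2 := abs_eps_le m
    linarith [neg_abs_le (dterm ρ m x)]
  · push Not at h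
    simp [h]

lemma deriv_lift (hρ : Irrational ρ) : deriv (lift ρ) = dlift ρ :=
  funext fun x => (hasDerivAt_lift hρ x).deriv

lemma contDiff_lift (hρ : Irrational ρ) : ContDiff ℝ 1 (lift ρ) := by
  rw [contDiff_one_iff_deriv, deriv_lift hρ]
  exact ⟨fun x => (hasDerivAt_lift hρ x).differentiableAt, continuous_dlift hρ⟩

lemma strictMono_lift (hρ : Irrational ρ) : StrictMono (lift ρ) :=
  strictMono_of_deriv_pos fun x => by rw [deriv_lift hρ]; exact dlift_pos hρ x

lemma surjective_lift (hρ : Irrational ρ) : Function.Surjective (lift ρ) :=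
  (CircleDeg1Lift.continuous_iff_surjective
    ⟨⟨lift ρ, (strictMono_lift hρ).monotone⟩, lift_add_one⟩).mp (contDiff_lift hρ).continuous

/-! ### The orbit of the centres of the gaps -/

/-- The centre of the gap over the point `n * ρ`. -/
def centre (ρ : ℝ) (n : ℤ) : ℝ := Hm ρ (n * ρ) + len n / 2

lemma Hm_mul (n : ℤ) : Hm ρ (n * ρ) = gap ρ n + ⌊(n : ℝ) * ρ⌋ := by
  rw [← Hm_ang_add, ang_add_floor]

lemma Hp_mul (hρ : Irrational ρ) (n : ℤ) : Hp ρ (n * ρ) = Hm ρ (n * ρ) + len n := by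
  rw [← ang_add_floor, Hp_ang hρ]

lemma centre_sub (n : ℤ) : centre ρ n - gap ρ n = len n / 2 + ⌊(n : ℝ) * ρ⌋ := by
  rw [centre, Hm_mul]
  ring

lemma centre_mem (hρ : Irrational ρ) (n : ℤ) :
    Hm ρ (n * ρ) < centre ρ n ∧ centre ρ n < Hp ρ (n * ρ) := by
  have := len_pos n
  rw [Hp_mul hρ, centre]
  constructor <;> linarith

lemma dlift_centre (hρ : Irrational ρ) (n : ℤ) : dlift ρ (centre ρ n) = len (n + 1) / len n := by
  have hn : dterm ρ n (centre ρ n) = eps n := by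
    have hp := (pbump_periodic (l := len n)).int_mul ⌊(n : ℝ) * ρ⌋ (len n / 2)
    rw [mul_one] at hp
    rw [dterm, centre_sub, hp, pbump_half (len_pos n) (len_lt_one n), mul_one]
  have h0 : ∀ m, m ≠ n → dterm ρ m (centre ρ n) = 0 := fun m hm => by
    by_contra h'
    obtain ⟨k, h1, h2⟩ := exists_of_dterm_ne_zero hρ h'
    have := eq_of_mem_Icc h1 h2 (centre_mem hρ n).1.le (centre_mem hρ n).2.le
    rw [← ang_add_floor] at this
    exact hm (ang_inj hρ this)
  rw [dlift, tsum_eq_single n h0, hn, eps]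
  ring

/-- By symmetry of the bump, centres of gaps are mapped to centres of gaps. -/
lemma lift_centre (hρ : Irrational ρ) (n : ℤ) : lift ρ (centre ρ n) = centre ρ (n + 1) := by
  have hn : term ρ n (centre ρ n) - term ρ n (Hm ρ (n * ρ)) = eps n * (len n / 2) := by
    have h0 := len_pos n
    have h1 := len_lt_one n
    rw [term, term, centre_sub, prim_add_int h0 h1, prim_half h0 h1, Hm_mul, add_sub_cancel_left,
      prim_int h0 h1]
    ring
  have hne : ∀ m, m ≠ n → term ρ m (centre ρ n) - term ρ m (Hm ρ (n * ρ)) = 0 := fun m hm => by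
    -- The `m`-th primitive is monotone and takes equal values at the ends of the `n`-th gap.
    have h0 := len_pos m
    have h1 := len_lt_one m
    have ha := prim_mono h0 h1 (sub_le_sub_right (centre_mem hρ n).1.le (gap ρ m))
    have hb := prim_mono h0 h1 (sub_le_sub_right (centre_mem hρ n).2.le (gap ρ m))
    rw [prim_Hm hρ] at ha
    rw [prim_Hp hρ, ← ceil_eq_floor_add_one fun k hk => hm (ang_inj (j := k)
      (k := ⌊(n : ℝ) * ρ⌋) hρ (by rw [ang_add_floor]; linarith))] at hb
    rw [term, term, ← mul_sub, prim_Hm hρ, le_antisymm hb ha, sub_self, mul_zero]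
  have hsum : ∑' m, term ρ m (centre ρ n) - ∑' m, term ρ m (Hm ρ (n * ρ))
      = eps n * (len n / 2) := by
    rw [← (summable_term _).tsum_sub (summable_term _), tsum_eq_single n hne, hn]
  have hH := lift_Hm hρ (n * ρ)
  have he := eps_mul_len n
  rw [lift] at hH
  have hc : centre ρ (n + 1) = Hm ρ (n * ρ + ρ) + len (n + 1) / 2 := by
    rw [centre]
    push_cast
    ring_nf
  rw [hc, ← hH, lift]
  have hc' : centre ρ n = Hm ρ (n * ρ) + len n / 2 := rfl
  linarith

end

section

variable {ρ : ℝ}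

/-! ### Iterates and derivatives on the circle -/

section general

variable (f : C1Diffeo)

lemma iterZ_add_one (n : ℤ) (x : ℝ) : f.iterZ (n + 1) x = f.F (f.iterZ n x) := by
  obtain (n | n) := n
  · exact Function.iterate_succ_apply' f.F n x
  · obtain _ | n := n
    · exact (f.right_inv x).symm
    · rw [show Int.negSucc (n + 1) + 1 = Int.negSucc n by lia]
      show f.Finv^[n + 1] x = f.F (f.Finv^[n + 1 + 1] x)
      rw [Function.iterate_succ_apply' f.Finv (n + 1), f.right_inv]

lemma iterZ_zero (x : ℝ) : f.iterZ 0 x = x := rfl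

lemma iterZ_eq_of_succ {u : ℤ → ℝ} (h : ∀ n, f.F (u n) = u (n + 1)) (n : ℤ) :
    f.iterZ n (u 0) = u n := by
  induction n using Int.induction_on with
  | zero => rfl
  | succ n ih => rw [iterZ_add_one, ih, h]
  | pred n ih =>
    apply f.left_inv.injective
    rw [← iterZ_add_one, h, sub_add_cancel, ih]

lemma differentiable_iterZ (n : ℤ) : Differentiable ℝ (f.iterZ n) := by
  obtain (n | n) := n
  · exact (f.contDiff.differentiable one_ne_zero).iterate n
  · exact (f.contDiff_inv.differentiable one_ne_zero).iterate (n + 1)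

lemma DfZ_add_one (n : ℤ) (x : 𝕊) : f.DfZ (n + 1) x = f.Df (f.mapZ n x) * f.DfZ n x := by
  induction x using QuotientAddGroup.induction_on with
  | H x =>
    show deriv (f.iterZ (n + 1)) x = deriv f.F (f.iterZ n x) * deriv (f.iterZ n) x
    have : f.iterZ (n + 1) = f.F ∘ f.iterZ n := funext (iterZ_add_one f n)
    rw [this, deriv_comp x (f.contDiff.differentiable one_ne_zero _)
      (differentiable_iterZ f n x)]

lemma DfZ_zero (x : 𝕊) : f.DfZ 0 x = 1 := by
  induction x using QuotientAddGroup.induction_on with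
  | H x => exact deriv_id x

lemma Df_pos (x : 𝕊) : 0 < f.Df x := by
  induction x using QuotientAddGroup.induction_on with
  | H x => exact f.deriv_pos x

lemma DfZ_pos (n : ℤ) (x : 𝕊) : 0 < f.DfZ n x := by
  induction n using Int.induction_on with
  | zero => rw [DfZ_zero]; exact one_pos
  | succ n ih => rw [DfZ_add_one]; exact mul_pos (Df_pos f _) ih
  | pred n ih =>
    have h := DfZ_add_one f (-n - 1) x
    rw [sub_add_cancel] at h
    rw [h] at ih
    exact (mul_pos_iff_of_pos_left (Df_pos f _)).mp ih

lemma toCircle_mapZ (n : ℤ) (x : 𝕊) : f.toCircle (f.mapZ n x) = f.mapZ (n + 1) x := by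
  induction x using QuotientAddGroup.induction_on with
  | H x => exact congrArg _ (iterZ_add_one f n x).symm

lemma continuous_periodic_lift {X : Type*} [TopologicalSpace X] {g : ℝ → X}
    (hg : Function.Periodic g 1) (hc : Continuous g) : Continuous (hg.lift : 𝕊 → X) :=
  hc.quotient_liftOn' _

lemma continuous_Df : Continuous f.Df :=
  continuous_periodic_lift _ (contDiff_one_iff_deriv.mp f.contDiff).2

lemma continuous_toCircle : Continuous f.toCircle :=
  continuous_periodic_lift _ ((AddCircle.continuous_mk' 1).comp f.contDiff.continuous)

variable {f}

lemma orbitSum_pos {x₀ : 𝕊} (hs : Summable fun n : ℤ => f.DfZ n x₀) : 0 < orbitSum f x₀ :=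
  hs.tsum_pos (fun n => (DfZ_pos f n x₀).le) 0 (DfZ_pos f 0 x₀)

lemma isProbabilityMeasure_orbitMeasure {x₀ : 𝕊} (hs : Summable fun n : ℤ => f.DfZ n x₀) :
    IsProbabilityMeasure (orbitMeasure f x₀) := by
  constructor
  have h : ∑' n : ℤ, ENNReal.ofReal (f.DfZ n x₀) = ENNReal.ofReal (orbitSum f x₀) :=
    (ENNReal.ofReal_tsum_of_nonneg (fun n => (DfZ_pos f n x₀).le) hs).symm
  rw [orbitMeasure, Measure.smul_apply, Measure.sum_apply _ MeasurableSet.univ]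
  simp only [Measure.smul_apply, measure_univ, smul_eq_mul, mul_one, h]
  exact ENNReal.inv_mul_cancel (by simpa using orbitSum_pos hs) ENNReal.ofReal_ne_top

lemma integral_orbitMeasure {x₀ : 𝕊} (hs : Summable fun n : ℤ => f.DfZ n x₀) {ψ : 𝕊 → ℝ}
    (hψ : Continuous ψ) : ∫ x, ψ x ∂(orbitMeasure f x₀)
      = (orbitSum f x₀)⁻¹ * ∑' n : ℤ, f.DfZ n x₀ * ψ (f.mapZ n x₀) := by
  have hprob := isProbabilityMeasure_orbitMeasure hs
  have hpos := orbitSum_pos hs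
  have hint : Integrable ψ (orbitMeasure f x₀) := hψ.integrable_of_hasCompactSupport
    (HasCompactSupport.of_compactSpace ψ)
  have hc : (ENNReal.ofReal (orbitSum f x₀))⁻¹ ≠ 0 := by simp
  have hc' : (ENNReal.ofReal (orbitSum f x₀))⁻¹ ≠ ⊤ := by simpa using hpos
  rw [orbitMeasure, integrable_smul_measure hc hc'] at hint
  rw [orbitMeasure, integral_smul_measure, integral_sum_measure hint, ENNReal.toReal_inv,
    ENNReal.toReal_ofReal hpos.le, smul_eq_mul]
  congr 2
  funext n
  rw [integral_smul_measure, integral_dirac, ENNReal.toReal_ofReal (DfZ_pos f n x₀).le,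
    smul_eq_mul]

/-- Reindexing the orbit by one step shows that the orbit measure is automorphic. -/
lemma automorphic_orbitMeasure {x₀ : 𝕊} (hs : Summable fun n : ℤ => f.DfZ n x₀) {φ : 𝕊 → ℝ}
    (hφ : Continuous φ) : ∫ x, φ x ∂(orbitMeasure f x₀)
      = ∫ x, φ (f.toCircle x) * f.Df x ∂(orbitMeasure f x₀) := by
  rw [integral_orbitMeasure hs hφ,
    integral_orbitMeasure hs (ψ := fun x => φ (f.toCircle x) * f.Df x)
    ((hφ.comp (continuous_toCircle f)).mul (continuous_Df f)),
    ← tsum_shift fun n : ℤ => f.DfZ n x₀ * φ (f.mapZ n x₀)]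
  congr 2
  funext n
  rw [DfZ_add_one, ← toCircle_mapZ]
  ring

end general

/-! ### The Denjoy counter-example -/

/-- The lift as a homeomorphism of the line. -/
def liftHomeo (hρ : Irrational ρ) : ℝ ≃ₜ ℝ :=
  ((strictMono_lift hρ).orderIsoOfSurjective _ (surjective_lift hρ)).toHomeomorph

/-- The Denjoy counter-example of rotation number `ρ`. -/
def diffeo (hρ : Irrational ρ) : C1Diffeo where
  F := lift ρ
  Finv := (liftHomeo hρ).symm
  contDiff := contDiff_lift hρ
  contDiff_inv := (liftHomeo hρ).contDiff_symm_deriv (fun x => (dlift_pos hρ x).ne')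
    (hasDerivAt_lift hρ) (contDiff_lift hρ)
  deriv_pos x := by rw [deriv_lift hρ]; exact dlift_pos hρ x
  map_add_one := lift_add_one
  left_inv := (liftHomeo hρ).symm_apply_apply
  right_inv := (liftHomeo hρ).apply_symm_apply

/-- The rotation number is `ρ`, since `Hm ρ` semiconjugates the translation by `ρ` to the lift. -/
lemma rot_diffeo (hρ : Irrational ρ) : (diffeo hρ).rot = ρ := by
  let H : CircleDeg1Lift := ⟨⟨Hm ρ, Hm_strictMono.monotone⟩, fun t => by
    simpa using Hm_add_int (ρ := ρ) t 1⟩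
  have h : Function.Semiconj H (CircleDeg1Lift.translate (Multiplicative.ofAdd ρ))
      (diffeo hρ).deg1 := fun t => by
    show Hm ρ (ρ + t) = lift ρ (Hm ρ t)
    rw [lift_Hm hρ, add_comm]
  rw [C1Diffeo.rot, ← CircleDeg1Lift.translationNumber_eq_of_semiconj h,
    CircleDeg1Lift.translationNumber_translate]

lemma iterZ_Hm (hρ : Irrational ρ) (n : ℤ) (t : ℝ) :
    (diffeo hρ).iterZ n (Hm ρ t) = Hm ρ (t + n * ρ) := by
  have := iterZ_eq_of_succ (diffeo hρ) (u := fun n : ℤ => Hm ρ (t + n * ρ)) (fun n => by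
    show lift ρ _ = _
    rw [lift_Hm hρ]
    push_cast
    ring_nf) n
  simpa using this

lemma iterZ_Hp (hρ : Irrational ρ) (n : ℤ) (t : ℝ) :
    (diffeo hρ).iterZ n (Hp ρ t) = Hp ρ (t + n * ρ) := by
  have := iterZ_eq_of_succ (diffeo hρ) (u := fun n : ℤ => Hp ρ (t + n * ρ)) (fun n => by
    show lift ρ _ = _
    rw [lift_Hp hρ]
    push_cast
    ring_nf) n
  simpa using this

/-- The lift of the Cantor set to the line: the ends of the intervals `[Hm ρ t, Hp ρ t]`. -/
def cantorLift (ρ : ℝ) : Set ℝ := range (Hm ρ) ∪ range (Hp ρ)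

/-- The minimal Cantor set. -/
def cantor (ρ : ℝ) : Set 𝕊 := (fun x : ℝ => (x : 𝕊)) '' cantorLift ρ

lemma add_int_mem {x : ℝ} (hx : x ∈ cantorLift ρ) (k : ℤ) : x + k ∈ cantorLift ρ := by
  obtain ⟨t, rfl⟩ | ⟨t, rfl⟩ := hx
  · exact Or.inl ⟨t + k, Hm_add_int t k⟩
  · exact Or.inr ⟨t + k, Hp_add_int t k⟩

lemma coe_mem_cantor {x : ℝ} : (x : 𝕊) ∈ cantor ρ ↔ x ∈ cantorLift ρ := by
  refine ⟨?_, fun h => ⟨x, h, rfl⟩⟩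
  rintro ⟨y, hy, hxy⟩
  have h0 : ((x - y : ℝ) : 𝕊) = 0 := by
    rw [AddCircle.coe_sub, sub_eq_zero]
    exact hxy.symm
  obtain ⟨k, hk⟩ := (AddCircle.coe_eq_zero_iff 1).mp h0
  have := add_int_mem hy k
  rwa [show y + k = x by simp at hk; linarith] at this

lemma notMem_cantorLift {x t : ℝ} (h1 : Hm ρ t < x) (h2 : x < Hp ρ t) : x ∉ cantorLift ρ := by
  rintro (⟨s, rfl⟩ | ⟨s, rfl⟩)
  · have := eq_of_mem_Icc h1.le h2.le le_rfl (Hm_le_Hp s)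
    subst this
    exact h1.ne rfl
  · have := eq_of_mem_Icc h1.le h2.le (Hm_le_Hp s) le_rfl
    subst this
    exact h2.ne rfl

lemma isClosed_cantorLift : IsClosed (cantorLift ρ) := by
  have h : cantorLift ρ = (⋃ t, Ioo (Hm ρ t) (Hp ρ t))ᶜ := by
    ext x
    simp only [mem_compl_iff, mem_iUnion, not_exists]
    refine ⟨fun hx t ht => notMem_cantorLift ht.1 ht.2 hx, fun h => ?_⟩
    obtain ⟨t, h1, h2⟩ := exists_mem_Icc (ρ := ρ) x
    rcases h1.eq_or_lt with h1 | h1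
    · exact Or.inl ⟨t, h1⟩
    · rcases h2.eq_or_lt with h2 | h2
      · exact Or.inr ⟨t, h2.symm⟩
      · exact absurd ⟨h1, h2⟩ (h t)
  rw [h, isClosed_compl_iff]
  exact isOpen_iUnion fun t => isOpen_Ioo

lemma isClosed_cantor : IsClosed (cantor ρ) := by
  have hq : Topology.IsQuotientMap (fun x : ℝ => (x : 𝕊)) := isQuotientMap_quotient_mk'
  rw [← hq.isClosed_preimage]
  have : (fun x : ℝ => (x : 𝕊)) ⁻¹' cantor ρ = cantorLift ρ := by
    ext x
    exact coe_mem_cantor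
  rw [this]
  exact isClosed_cantorLift

lemma iterZ_mem (hρ : Irrational ρ) (n : ℤ) {x : ℝ} (hx : x ∈ cantorLift ρ) :
    (diffeo hρ).iterZ n x ∈ cantorLift ρ := by
  obtain ⟨t, rfl⟩ | ⟨t, rfl⟩ := hx
  · exact Or.inl ⟨_, (iterZ_Hm hρ n t).symm⟩
  · exact Or.inr ⟨_, (iterZ_Hp hρ n t).symm⟩

/-- Orbits of an irrational rotation are dense, in terms of lifts. -/
lemma exists_rot_between (hρ : Irrational ρ) (t : ℝ) {u v : ℝ} (huv : u < v) :
    ∃ n k : ℤ, u < t + n * ρ + k ∧ t + n * ρ + k < v := by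
  have hd : Dense (AddSubgroup.closure {ρ, 1} : Set ℝ) :=
    dense_addSubgroupClosure_pair_iff.mpr (by simpa using hρ)
  obtain ⟨y, hy, h1, h2⟩ := hd.exists_between (sub_lt_sub_right huv t)
  obtain ⟨n, k, rfl⟩ := AddSubgroup.mem_closure_pair.mp hy
  refine ⟨n, k, ?_, ?_⟩ <;> simp only [zsmul_eq_mul, mul_one] at h1 h2 <;> linarith

/-- The (lifted) orbit of a point of the Cantor set accumulates at every point of it. -/
lemma exists_orbit_near (hρ : Irrational ρ) {x y δ : ℝ} (hx : x ∈ cantorLift ρ)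
    (hy : y ∈ cantorLift ρ) (hδ : 0 < δ) :
    ∃ n k : ℤ, (diffeo hρ).iterZ n x + k ≠ y ∧ |(diffeo hρ).iterZ n x + k - y| < δ := by
  -- The orbit of `x` stays in the blown up intervals over a dense orbit of the rotation.
  obtain ⟨t, ht⟩ : ∃ t, ∀ n k : ℤ, Hm ρ (t + n * ρ + k) ≤ (diffeo hρ).iterZ n x + k ∧
      (diffeo hρ).iterZ n x + k ≤ Hp ρ (t + n * ρ + k) := by
    obtain ⟨t, rfl⟩ | ⟨t, rfl⟩ := hx
    · refine ⟨t, fun n k => ?_⟩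
      rw [iterZ_Hm, Hm_add_int, Hp_add_int]
      exact ⟨le_rfl, by linarith [Hm_le_Hp (ρ := ρ) (t + n * ρ)]⟩
    · refine ⟨t, fun n k => ?_⟩
      rw [iterZ_Hp, Hm_add_int, Hp_add_int]
      exact ⟨by linarith [Hm_le_Hp (ρ := ρ) (t + n * ρ)], le_rfl⟩
  obtain ⟨u, rfl⟩ | ⟨u, rfl⟩ := hy
  · obtain ⟨v, hv, hv'⟩ := exists_lt_Hp (show Hm ρ u - δ < Hm ρ u by linarith)
    obtain ⟨n, k, h1, h2⟩ := exists_rot_between hρ t hv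
    have h3 := (Hp_lt_Hm (ρ := ρ) h1).trans_le (ht n k).1
    have h4 := (ht n k).2.trans_lt (Hp_lt_Hm (ρ := ρ) h2)
    exact ⟨n, k, h4.ne, by rw [abs_lt]; constructor <;> linarith⟩
  · obtain ⟨v, hv, hv'⟩ := exists_Hm_lt (show Hp ρ u < Hp ρ u + δ by linarith)
    obtain ⟨n, k, h1, h2⟩ := exists_rot_between hρ t hv
    have h3 := (Hp_lt_Hm (ρ := ρ) h1).trans_le (ht n k).1
    have h4 := (ht n k).2.trans_lt (Hp_lt_Hm (ρ := ρ) h2)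
    exact ⟨n, k, h3.ne', by rw [abs_lt]; constructor <;> linarith⟩

/-- The complement of the lifted Cantor set is dense. -/
lemma exists_gap_between (hρ : Irrational ρ) {x y : ℝ} (hxy : x < y) :
    ∃ z, x < z ∧ z < y ∧ z ∉ cantorLift ρ := by
  obtain ⟨s, hs1, hs2⟩ := exists_mem_Icc (ρ := ρ) x
  obtain ⟨t, ht1, ht2⟩ := exists_mem_Icc (ρ := ρ) y
  rcases lt_trichotomy s t with h | h | h
  · obtain ⟨n, k, h1, h2⟩ := exists_rot_between hρ 0 h
    have h3 := Hp_lt_Hm (ρ := ρ) h1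
    have h4 := Hp_lt_Hm (ρ := ρ) h2
    obtain ⟨c1, c2⟩ := centre_mem hρ n
    rw [zero_add] at h3 h4
    rw [Hm_add_int] at h3
    rw [Hp_add_int] at h4
    refine ⟨centre ρ n + k, by linarith, by linarith,
      notMem_cantorLift (t := n * ρ + k) ?_ ?_⟩
    · rw [Hm_add_int]; linarith
    · rw [Hp_add_int]; linarith
  · subst h
    exact ⟨(x + y) / 2, by linarith, by linarith,
      notMem_cantorLift (t := s) (by linarith) (by linarith)⟩
  · linarith [Hp_lt_Hm (ρ := ρ) h]

lemma zero_mem_cantorLift : (0 : ℝ) ∈ cantorLift ρ := Or.inl ⟨0, Hm_zero⟩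

lemma centre_notMem (hρ : Irrational ρ) (n : ℤ) : centre ρ n ∉ cantorLift ρ :=
  notMem_cantorLift (centre_mem hρ n).1 (centre_mem hρ n).2

lemma coe_add_intCast (x : ℝ) (k : ℤ) : ((x + k : ℝ) : 𝕊) = x := by
  rw [AddCircle.coe_add]
  have : ((k : ℝ) : 𝕊) = 0 := (AddCircle.coe_eq_zero_iff 1).mpr ⟨k, by simp⟩
  rw [this, add_zero]

lemma dist_coe_le (x y : ℝ) : dist (x : 𝕊) (y : 𝕊) ≤ |x - y| := by
  rw [dist_eq_norm, ← AddCircle.coe_sub, ← Real.norm_eq_abs]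
  exact QuotientAddGroup.norm_mk_le_norm

lemma mem_closure_orbit (hρ : Irrational ρ) {x y : 𝕊} (hx : x ∈ cantor ρ) (hy : y ∈ cantor ρ) :
    y ∈ closure (Set.range fun n : ℤ => (diffeo hρ).mapZ n x) := by
  obtain ⟨x, hx, rfl⟩ := hx
  obtain ⟨y, hy, rfl⟩ := hy
  rw [Metric.mem_closure_range_iff]
  intro δ hδ
  obtain ⟨n, k, -, h⟩ := exists_orbit_near hρ hx hy hδ
  refine ⟨n, ?_⟩
  show dist (y : 𝕊) (((diffeo hρ).iterZ n x : ℝ) : 𝕊) < δ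
  rw [← coe_add_intCast ((diffeo hρ).iterZ n x) k, dist_comm]
  exact (dist_coe_le _ _).trans_lt h

lemma perfect_cantor (hρ : Irrational ρ) : Perfect (cantor ρ) := by
  refine ⟨isClosed_cantor, ?_⟩
  rintro _ ⟨y, hy, rfl⟩
  rw [accPt_iff_nhds]
  intro U hU
  obtain ⟨δ, hδ, hball⟩ := Metric.mem_nhds_iff.mp hU
  obtain ⟨n, k, hne, h⟩ := exists_orbit_near hρ hy hy (lt_min hδ one_pos)
  have hmem := add_int_mem (iterZ_mem hρ n hy) k
  refine ⟨(((diffeo hρ).iterZ n y + k : ℝ) : 𝕊), ⟨hball ?_, coe_mem_cantor.mpr hmem⟩, fun heq => ?_⟩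
  · exact (dist_coe_le _ _).trans_lt (h.trans_le (min_le_left _ _))
  · -- Two lifts at distance less than `1` of the same point coincide.
    have h0 : (((diffeo hρ).iterZ n y + k - y : ℝ) : 𝕊) = 0 := by
      rw [AddCircle.coe_sub, sub_eq_zero]
      exact heq
    obtain ⟨j, hj⟩ := (AddCircle.coe_eq_zero_iff 1).mp h0
    have h1 := h.trans_le (min_le_right _ _)
    rw [← hj, zsmul_eq_mul, mul_one, ← Int.cast_abs] at h1
    have h2 : j = 0 := Int.abs_lt_one_iff.mp (by exact_mod_cast h1)
    rw [h2, zero_smul] at hj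
    exact hne (by linarith)

/-- Cut the circle at the centre of a gap, and use that any two lifted points are
separated by a point off the lifted Cantor set. -/
lemma isTotallyDisconnected_cantor (hρ : Irrational ρ) : IsTotallyDisconnected (cantor ρ) := by
  intro s hs hpre x hx y hy
  have : Fact ((0 : ℝ) < 1) := ⟨one_pos⟩
  let c := centre ρ 0
  let e : 𝕊 → ℝ := fun z => (AddCircle.equivIco 1 c z : ℝ)
  have he : ∀ z, ((e z : ℝ) : 𝕊) = z := fun z => (AddCircle.equivIco 1 c).symm_apply_apply z
  have hcont : ContinuousOn e s := fun z hz => by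
    have hzc : z ≠ (c : 𝕊) := fun h =>
      centre_notMem hρ 0 (coe_mem_cantor.mp (show (c : 𝕊) ∈ cantor ρ from h ▸ hs hz))
    exact (continuous_subtype_val.continuousAt.comp
      (AddCircle.continuousAt_equivIco 1 c hzc)).continuousWithinAt
  have hoc := (hpre.image e hcont).ordConnected
  have key : ∀ a ∈ s, ∀ b ∈ s, ¬ e a < e b := fun a ha b hb hab => by
    obtain ⟨z, h1, h2, hz⟩ := exists_gap_between hρ hab
    obtain ⟨w, hw, hwz⟩ := hoc.out ⟨a, ha, rfl⟩ ⟨b, hb, rfl⟩ ⟨h1.le, h2.le⟩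
    refine hz (coe_mem_cantor.mp ?_)
    rw [← hwz, he]
    exact hs hw
  rw [← he x, ← he y, le_antisymm (not_lt.mp (key y hy x hx)) (not_lt.mp (key x hx y hy))]

lemma image_cantor (hρ : Irrational ρ) : (diffeo hρ).toCircle '' cantor ρ = cantor ρ := by
  apply Subset.antisymm
  · rintro _ ⟨_, ⟨x, hx, rfl⟩, rfl⟩
    exact coe_mem_cantor.mpr (iterZ_mem hρ 1 hx)
  · rintro _ ⟨x, hx, rfl⟩
    refine ⟨_, ⟨_, iterZ_mem hρ (-1) hx, rfl⟩, ?_⟩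
    exact congrArg _ ((diffeo hρ).right_inv x)

lemma isMinimalInvariantCantor (hρ : Irrational ρ) :
    IsMinimalInvariantCantor (diffeo hρ) (cantor ρ) := by
  refine ⟨⟨_, 0, zero_mem_cantorLift, rfl⟩, perfect_cantor hρ, isTotallyDisconnected_cantor hρ,
    image_cantor hρ, fun x hx => Subset.antisymm ?_ fun y hy => mem_closure_orbit hρ hx hy⟩
  refine closure_minimal ?_ isClosed_cantor
  rintro _ ⟨n, rfl⟩
  obtain ⟨x, hx, rfl⟩ := hx
  exact coe_mem_cantor.mpr (iterZ_mem hρ n hx)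

/-- Along the centres of the gaps the derivatives of the iterates are ratios of lengths. -/
lemma DfZ_centre (hρ : Irrational ρ) (n : ℤ) :
    (diffeo hρ).DfZ n (centre ρ 0 : ℝ) = len n / len 0 := by
  have h : ∀ n : ℤ, (diffeo hρ).DfZ (n + 1) (centre ρ 0 : ℝ)
      = len (n + 1) / len n * (diffeo hρ).DfZ n (centre ρ 0 : ℝ) := fun n => by
    rw [DfZ_add_one, ← dlift_centre hρ, ← deriv_lift hρ,
      ← iterZ_eq_of_succ (diffeo hρ) (u := centre ρ) (lift_centre hρ) n]
    rfl
  induction n using Int.induction_on with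
  | zero => rw [DfZ_zero, div_self (len_pos 0).ne']
  | succ n ih =>
    have := (len_pos n).ne'
    rw [h, ih]
    field_simp
  | pred n ih =>
    have h1 := h (-n - 1)
    have h2 := (len_pos (-n)).ne'
    have h3 := (len_pos (-n - 1)).ne'
    have h4 := (len_pos 0).ne'
    rw [sub_add_cancel, ih] at h1
    field_simp at h1 ⊢
    linarith

end

end DenjoyYoccoz

open DenjoyYoccoz

/-- **Theorem (R. Douady & J.-C. Yoccoz).** For each irrational angle `ρ` there exists a `C¹`
Denjoy counter-example `f` of rotation number `ρ` and a point `x₀` in the complement of its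
minimal invariant Cantor set with `S := Σ_{n ∈ ℤ} D(fⁿ)(x₀) < ∞`; in particular the
probability measure `ν := S⁻¹ Σ_{n ∈ ℤ} D(fⁿ)(x₀) δ_{fⁿ(x₀)}` is 1-automorphic for `f`. -/
theorem douady_yoccoz (ρ : ℝ) (hρ : Irrational ρ) :
    ∃ f : C1Diffeo, f.rot = ρ ∧
      ∃ K : Set 𝕊, IsMinimalInvariantCantor f K ∧
        ∃ x₀ : 𝕊, x₀ ∉ K ∧ (Summable fun n : ℤ => f.DfZ n x₀) ∧
          IsProbabilityMeasure (orbitMeasure f x₀) ∧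
          ∀ φ : 𝕊 → ℝ, Continuous φ →
            ∫ x, φ x ∂(orbitMeasure f x₀)
              = ∫ x, φ (f.toCircle x) * f.Df x ∂(orbitMeasure f x₀) := by
  have hs : Summable fun n : ℤ => (diffeo hρ).DfZ n (centre ρ 0 : ℝ) := by
    simp only [DfZ_centre hρ]
    exact summable_len.div_const _
  exact ⟨diffeo hρ, rot_diffeo hρ, cantor ρ, isMinimalInvariantCantor hρ, (centre ρ 0 : ℝ),
    fun h => centre_notMem hρ 0 (coe_mem_cantor.mp h), hs, isProbabilityMeasure_orbitMeasure hs,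
    fun φ hφ => automorphic_orbitMeasure hs hφ⟩
end
end

section
/- For every irrational number ρ (mod 1), there exists a minimal orientation-preserving C^1 circle diffeomorphism f with rotation number ρ admitting a measurable fundamental domain C (a Borel measurable set of positive Lebesgue measure that is disjoint from all of its iterates f^n(C), n ≠ 0), and moreover for each point x_0 ∈ C one has S := Σ_{n ∈ ℤ} D(f^n)(x_0) < ∞. -/
/-!
The diffeomorphism is built from the rotation `R` by `ρ` by changing the smooth structure. Suppose
`μ` is an atomless measure of full support on the circle, of total mass `1`, such that
`d(R⁻¹)_* μ / dμ = exp φ` with `φ` continuous. The distribution function `H` of `μ` is a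
homeomorphism sending `μ` to Lebesgue measure, so `f = H ∘ R ∘ H⁻¹` is a `C¹` diffeomorphism with
`f' ∘ H = exp φ`. It is conjugate to `R`, hence minimal with rotation number `ρ`, and
`D(fⁿ)(H x) = exp (θ n x)`, where `θ n` is the Birkhoff cocycle of `φ`. If `K` is disjoint from all
its translates `Rⁿ K`, `n ≠ 0`, and `μ K > 0`, then `C = H K` is a fundamental domain of positive
Lebesgue measure, and the last claim becomes the summability of `exp (θ n x)` for `x ∈ K`.

* **The set `K`** (`exists_noAtoms_section`). The set `E` of all sums `∑ dᵢ 4⁻ⁱ`, `dᵢ ∈ {-1, 0, 1}`,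
  is Lebesgue null since it is covered by three translates of `E / 4` (`volume_digitDiff`). Hence
  almost every `s` satisfies `E ∩ s (ℤρ + ℤ) ⊆ {0}`, and `K = s⁻¹ {∑ εᵢ 4⁻ⁱ : εᵢ ∈ {0, 1}}` is an
  uncountable compact set with at most one point on each orbit of `R`. It carries an atomless
  probability measure `ν`.
* **The cocycle** (`exists_tower`, `exists_cocycle`). Take `θ n x = ∑ₖ (vₖ x - vₖ (Rⁿ x))`, where
  `vₖ ≥ 0` is continuous, vanishes on `K`, changes by at most `εₖ` under `R` with `∑ εₖ < ∞`, and
  satisfies `vₖ (Rⁿ x) ≥ 2ᵏ εₖ` for `x ∈ K` and `2ᵏ ≤ |n| < 2ᵏ⁺¹`. Such a `vₖ` is the infimal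
  convolution `inf_j (εₖ |j| + A d(R⁻ʲ x, K))` with `A` large. With `εₖ = 2 (k + 1) / 2ᵏ` one gets
  `exp (θ n x) ≤ 1 / n²` on `K`.
* **The measure** (`exists_measure`). `μ` is the normalization of the sum over `n` of the images
  under `Rⁿ` of `exp (θ n) ν`. The cocycle identity gives the required Radon-Nikodym derivative, the
  bound on `K` gives finiteness, and density of the orbits of `R` gives full support.
* **The conjugacy** (`exists_distribution`, `hasDerivAt_conj`, `exists_diffeo`, `iterZ_conj`).

Everything is done on the line, with measures and maps compatible with the unit translation.
-/

open MeasureTheory Function Filter Set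
open scoped Topology

noncomputable section

/-! ### The cocycle -/

/-- A transfer function `v` vanishing on `K`, varying slowly along orbits, and large on the iterates
`K + n • α` with `N ≤ |n| < 2N`: the infimum over `j` of `ε |j| + A d(x - j • α, K)`. The slow
variation is automatic from re-indexing `j`; the lower bound holds because the finitely many
translates of `K` involved are at positive distance from `K`. -/
lemma exists_tower {K : Set 𝕊} (hK : IsCompact K) (hne : K.Nonempty) (α : 𝕊)
    (hα : ∀ n : ℤ, n ≠ 0 → ∀ x ∈ K, x + n • α ∉ K) (N : ℕ) {ε : ℝ} (hε : 0 < ε) :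
    ∃ v : 𝕊 → ℝ, Continuous v ∧ (∀ x, 0 ≤ v x) ∧ (∀ x ∈ K, v x = 0) ∧
      (∀ (n : ℤ) (x : 𝕊), |v (x + n • α) - v x| ≤ ε * |(n : ℝ)|) ∧
      ∀ x ∈ K, ∀ n : ℤ, (N : ℤ) ≤ |n| → |n| < 2 * N → ε * N ≤ v (x + n • α) := by
  have hsep : ∀ n : ℤ, n ≠ 0 → ∀ᶠ δ in 𝓝[>] (0 : ℝ), ∀ x ∈ K,
      δ ≤ Metric.infDist (x + n • α) K := by
    intro n hn
    have hc : Continuous fun x : 𝕊 => Metric.infDist (x + n • α) K :=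
      (Metric.continuous_infDist_pt K).comp (continuous_id.add continuous_const)
    obtain ⟨x₀, hx₀, hmin⟩ := hK.exists_isMinOn hne hc.continuousOn
    have hpos : 0 < Metric.infDist (x₀ + n • α) K :=
      (hK.isClosed.notMem_iff_infDist_pos hne).1 (hα n hn x₀ hx₀)
    filter_upwards [Ioo_mem_nhdsGT hpos] with δ hδ x hx
    exact hδ.2.le.trans (hmin hx)
  obtain ⟨δ, hδ, hδ0⟩ : ∃ δ : ℝ, (∀ n ∈ Finset.Icc (-(3 * N : ℤ)) (3 * N), n ≠ 0 → ∀ x ∈ K,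
      δ ≤ Metric.infDist (x + n • α) K) ∧ 0 < δ := by
    have h1 : ∀ᶠ δ in 𝓝[>] (0 : ℝ), ∀ n ∈ Finset.Icc (-(3 * N : ℤ)) (3 * N), n ≠ 0 → ∀ x ∈ K,
        δ ≤ Metric.infDist (x + n • α) K := by
      rw [Filter.eventually_all_finset]
      intro n _
      by_cases hn : n = 0
      · simp [hn]
      · simpa [hn] using hsep n hn
    exact (h1.and self_mem_nhdsWithin).exists
  -- This slope makes a distance of at least `δ` contribute at least `ε * N`.
  set A : ℝ := ε * N / δ with hA
  have hA0 : 0 ≤ A := by positivity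
  let g : ℤ → 𝕊 → ℝ := fun j x => ε * |(j : ℝ)| + A * Metric.infDist (x - j • α) K
  have hg0 : ∀ j x, 0 ≤ g j x := fun j x => by
    have := Metric.infDist_nonneg (x := x - j • α) (s := K)
    positivity
  have hbdd : ∀ x, BddBelow (range fun j => g j x) := fun x =>
    ⟨0, by rintro _ ⟨j, rfl⟩; exact hg0 j x⟩
  have hle : ∀ x j, ⨅ i, g i x ≤ g j x := fun x j => ciInf_le (hbdd x) j
  refine ⟨fun x => ⨅ j, g j x, ?_, fun x => le_ciInf fun j => hg0 j x, ?_, ?_, ?_⟩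
  · have hlip : ∀ x y, ⨅ j, g j x ≤ (⨅ j, g j y) + A * dist x y := by
      intro x y
      rw [← sub_le_iff_le_add]
      refine le_ciInf fun j => ?_
      have h1 := hle x j
      have h2 : Metric.infDist (x - j • α) K ≤ Metric.infDist (y - j • α) K + dist x y := by
        simpa using Metric.infDist_le_infDist_add_dist (s := K) (x := x - j • α) (y := y - j • α)
      have h3 := mul_le_mul_of_nonneg_left h2 hA0
      simp only [g] at h1 ⊢
      linarith
    exact (LipschitzWith.of_le_add_mul ⟨A, hA0⟩ hlip).continuous
  · intro x hx
    refine le_antisymm ?_ (le_ciInf fun j => hg0 j x)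
    refine (hle x 0).trans_eq ?_
    simp [g, Metric.infDist_zero_of_mem hx]
  · have key : ∀ (n : ℤ) (x : 𝕊), ⨅ j, g j (x + n • α) ≤ (⨅ j, g j x) + ε * |(n : ℝ)| := by
      intro n x
      rw [← sub_le_iff_le_add]
      refine le_ciInf fun j => ?_
      have h1 := hle (x + n • α) (j + n)
      have h2 : x + n • α - (j + n) • α = x - j • α := by rw [add_smul]; abel
      have h3 : |((j + n : ℤ) : ℝ)| ≤ |(j : ℝ)| + |(n : ℝ)| := by
        push_cast; exact abs_add_le _ _
      have h4 := mul_le_mul_of_nonneg_left h3 hε.le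
      simp only [g, h2] at h1 ⊢
      linarith
    intro n x
    rw [abs_le]
    have h1 := key n x
    have h2 := key (-n) (x + n • α)
    have h3 : x + n • α + (-n) • α = x := by rw [neg_smul]; abel
    rw [h3] at h2
    push_cast at h2
    rw [abs_neg] at h2
    constructor <;> linarith
  · intro x hx n hn hn2
    refine le_ciInf fun j => ?_
    have hd := Metric.infDist_nonneg (x := x + n • α - j • α) (s := K)
    -- Either `|j|` alone is large enough, or `n - j` is nonzero with `|n - j| < 3N`.
    by_cases hj : (N : ℤ) ≤ |j|
    · have : (N : ℝ) ≤ |(j : ℝ)| := by exact_mod_cast hj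
      have h4 := mul_le_mul_of_nonneg_left this hε.le
      have : 0 ≤ A * Metric.infDist (x + n • α - j • α) K := by positivity
      simp only [g]; linarith
    · have hjn : n - j ≠ 0 := by
        intro h
        have : n = j := by omega
        exact hj (this ▸ hn)
      have hmem : n - j ∈ Finset.Icc (-(3 * N : ℤ)) (3 * N) := by
        rw [Finset.mem_Icc]
        push Not at hj
        rw [abs_lt] at hj hn2
        omega
      have h1 := hδ _ hmem hjn x hx
      have h2 : x + (n - j) • α = x + n • α - j • α := by rw [sub_smul]; abel
      rw [h2] at h1
      have h3 := mul_le_mul_of_nonneg_left h1 hA0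
      have h4 : A * δ = ε * N := by rw [hA]; field_simp
      have h5 : 0 ≤ ε * |(j : ℝ)| := by positivity
      simp only [g]; linarith

/-- A continuous cocycle `θ` over the translation by `α` such that `exp (θ n)` is dominated on `K`
by a summable sequence. It is the sum of the coboundaries of the functions of `exists_tower` at the
scales `2 ^ k`. -/
lemma exists_cocycle {K : Set 𝕊} (hK : IsCompact K) (hne : K.Nonempty) (α : 𝕊)
    (hα : ∀ n : ℤ, n ≠ 0 → ∀ x ∈ K, x + n • α ∉ K) :
    ∃ θ : ℤ → 𝕊 → ℝ, (∀ n, Continuous (θ n)) ∧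
      (∀ m n x, θ (m + n) x = θ m x + θ n (x + m • α)) ∧
      ∃ B : ℤ → ℝ, Summable B ∧ ∀ n, ∀ x ∈ K, Real.exp (θ n x) ≤ B n := by
  -- The sum of `ε k` converges, while `2 ^ k * ε k` exceeds twice the logarithm of `2 ^ (k + 1)`.
  let ε : ℕ → ℝ := fun k => 2 * (k + 1) / 2 ^ k
  have hε : ∀ k, 0 < ε k := fun k => by positivity
  have hεs : Summable ε := by
    have h1 := summable_pow_mul_geometric_of_norm_lt_one 1 (r := (1 / 2 : ℝ)) (by norm_num)
    have h2 := summable_geometric_of_lt_one (r := (1 / 2 : ℝ)) (by norm_num) (by norm_num)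
    refine ((h1.add h2).mul_left 2).congr fun k => ?_
    simp only [ε, one_div, inv_pow]
    field_simp
  choose v hvc hv0 hvK hvl hvt using fun k : ℕ => exists_tower hK hne α hα (2 ^ k) (hε k)
  have hb : ∀ (n : ℤ) (k : ℕ) (x : 𝕊), ‖v k x - v k (x + n • α)‖ ≤ ε k * |(n : ℝ)| :=
    fun n k x => by rw [Real.norm_eq_abs, abs_sub_comm]; exact hvl k n x
  have hs : ∀ (n : ℤ) (x : 𝕊), Summable fun k => v k x - v k (x + n • α) := fun n x =>
    Summable.of_norm_bounded (hεs.mul_right _) fun k => hb n k x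
  refine ⟨fun n x => ∑' k, (v k x - v k (x + n • α)), fun n => ?_, fun m n x => ?_,
    fun n => (if n = 0 then 1 else 0) + 1 / (n : ℝ) ^ 2, ?_, fun n x hx => ?_⟩
  · refine continuous_tsum (fun k => ?_) (hεs.mul_right |(n : ℝ)|) fun k x => hb n k x
    exact (hvc k).sub ((hvc k).comp (continuous_id.add continuous_const))
  · rw [← (hs m x).tsum_add (hs n _)]
    refine tsum_congr fun k => ?_
    have : x + (m + n) • α = x + m • α + n • α := by rw [add_smul]; abel
    rw [this]; ring
  · refine Summable.add ?_ (Real.summable_one_div_int_pow.2 (by norm_num))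
    exact summable_of_ne_finset_zero (s := {0}) fun n hn => by simpa using hn
  · by_cases hn : n = 0
    · simp [hn]
    · simp only [hn, if_false, zero_add]
      -- On `K` all terms of the series are nonpositive; the one with `2 ^ k ≤ |n| < 2 ^ (k + 1)`
      -- gives the bound.
      set k := Nat.log 2 n.natAbs with hk
      have hn' : n.natAbs ≠ 0 := by simpa using hn
      have h1 : 2 ^ k ≤ n.natAbs := Nat.pow_log_le_self 2 hn'
      have h2 : n.natAbs < 2 ^ (k + 1) := Nat.lt_pow_succ_log_self (by norm_num) _
      have habs : |n| = (n.natAbs : ℤ) := Int.abs_eq_natAbs n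
      have h3 : ε k * (2 ^ k : ℕ) ≤ v k (x + n • α) := by
        refine hvt k x hx n ?_ ?_
        · rw [habs]; exact_mod_cast h1
        · rw [habs]; rw [pow_succ'] at h2; exact_mod_cast h2
      have h4 : ε k * (2 ^ k : ℕ) = 2 * (k + 1) := by
        simp only [ε]; push_cast; field_simp
      have h5 : ∑' k, (v k x - v k (x + n • α)) ≤ -(2 * (k + 1)) := by
        have hs' := (hs n x).neg
        have := hs'.le_tsum k fun j _ => by simp [hvK j x hx, hv0 j]
        rw [tsum_neg] at this
        simp only [hvK k x hx] at this
        linarith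
      have h6 : (2 : ℝ) ≤ Real.exp 1 := by linarith [Real.add_one_le_exp 1]
      have h7 : (n : ℝ) ^ 2 ≤ Real.exp (2 * (k + 1)) := by
        have e1 : Real.exp (2 * (k + 1)) = (Real.exp 1 ^ (k + 1)) ^ 2 := by
          rw [← Real.exp_nat_mul, ← Real.exp_nat_mul]; push_cast; ring_nf
        have e2 : |(n : ℝ)| ≤ 2 ^ (k + 1) := by
          have : |n| ≤ 2 ^ (k + 1) := by rw [habs]; exact_mod_cast h2.le
          exact_mod_cast this
        rw [e1, ← sq_abs]
        gcongr
        exact e2.trans (by gcongr)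
      calc Real.exp _ ≤ Real.exp (-(2 * (k + 1))) := Real.exp_le_exp.2 h5
        _ = 1 / Real.exp (2 * (k + 1)) := by rw [Real.exp_neg, one_div]
        _ ≤ 1 / (n : ℝ) ^ 2 := by
          apply one_div_le_one_div_of_le _ h7
          have : (n : ℝ) ≠ 0 := by exact_mod_cast hn
          positivity

/-! ### A compact set meeting each orbit at most once -/

/-- The set of sums `∑ dᵢ 4⁻ⁱ` with digits `dᵢ ∈ {-1, 0, 1}`. It contains the difference set of the
Cantor set of sums with digits `0` and `1`. -/
def digitDiff : Set ℝ :=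
  {y | ∃ d : ℕ → ℝ, (∀ i, d i = -1 ∨ d i = 0 ∨ d i = 1) ∧ y = ∑' i, d i * (1 / 4) ^ i}

open scoped Pointwise in
lemma volume_digitDiff : volume digitDiff = 0 := by
  have hgeo := summable_geometric_of_lt_one (r := (1 / 4 : ℝ)) (by norm_num) (by norm_num)
  have hbd : ∀ d : ℕ → ℝ, (∀ i, d i = -1 ∨ d i = 0 ∨ d i = 1) →
      ∀ i, ‖d i * (1 / 4) ^ i‖ ≤ (1 / 4 : ℝ) ^ i := by
    intro d hd i
    have : |d i| ≤ 1 := by rcases hd i with h | h | h <;> simp [h]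
    rw [norm_mul, Real.norm_eq_abs, Real.norm_of_nonneg (by positivity)]
    exact mul_le_of_le_one_left (by positivity) this
  have hfin : volume digitDiff ≠ ⊤ := by
    refine (lt_of_le_of_lt (measure_mono (t := Metric.closedBall 0 (∑' i, (1 / 4 : ℝ) ^ i)) ?_)
      measure_closedBall_lt_top).ne
    rintro _ ⟨d, hd, rfl⟩
    rw [mem_closedBall_zero_iff]
    exact tsum_of_norm_bounded hgeo.hasSum (hbd d hd)
  have hsub : digitDiff ⊆ ⋃ e ∈ ({-1, 0, 1} : Finset ℝ),
      (fun x => e + x) '' ((1 / 4 : ℝ) • digitDiff) := by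
    rintro _ ⟨d, hd, rfl⟩
    have hs : Summable fun i => d i * (1 / 4 : ℝ) ^ i :=
      Summable.of_norm_bounded hgeo (hbd d hd)
    simp only [mem_iUnion]
    refine ⟨d 0, by simpa using hd 0, _, Set.smul_mem_smul_set ⟨fun i => d (i + 1),
      fun i => hd (i + 1), rfl⟩, ?_⟩
    rw [hs.tsum_eq_zero_add, smul_eq_mul, ← tsum_mul_left]
    simp only [pow_zero, mul_one]
    congr 1
    exact tsum_congr fun i => by ring
  -- Three copies scaled by `1 / 4`: the finite number `volume digitDiff` is at most `3 / 4` of itself.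
  have hle : volume digitDiff ≤ ENNReal.ofReal (3 / 4) * volume digitDiff := by
    calc volume digitDiff ≤ _ := measure_mono hsub
      _ ≤ _ := measure_biUnion_finset_le _ _
      _ = ENNReal.ofReal (3 / 4) * volume digitDiff := by
        have : ∀ e : ℝ, volume ((fun x => e + x) '' ((1 / 4 : ℝ) • digitDiff)) =
            ENNReal.ofReal (1 / 4) * volume digitDiff := by
          intro e
          rw [image_add_left, measure_preimage_add, Measure.addHaar_smul]
          simp
        simp only [this, Finset.sum_const]
        rw [Finset.card_eq_three.2 ⟨-1, 0, 1, by norm_num, by norm_num, by norm_num, rfl⟩,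
          nsmul_eq_mul, ← mul_assoc]
        congr 1
        rw [show (3 / 4 : ℝ) = 3 * (1 / 4) by norm_num, ENNReal.ofReal_mul (by norm_num)]
        simp
  by_contra h0
  have : ENNReal.ofReal (3 / 4) * volume digitDiff < 1 * volume digitDiff := by
    rw [ENNReal.mul_lt_mul_iff_left h0 hfin]
    rw [← ENNReal.ofReal_one]
    exact (ENNReal.ofReal_lt_ofReal_iff (by norm_num)).2 (by norm_num)
  rw [one_mul] at this
  exact absurd hle (not_le.2 this)

open scoped Pointwise in
/-- An uncountable compact set `K` no two distinct points of which differ by an element of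
`ℤρ + ℤ`, together with an atomless probability measure carried by `K`. -/
lemma exists_noAtoms_section (ρ : ℝ) :
    ∃ (K : Set ℝ) (ν : Measure ℝ), IsCompact K ∧ IsProbabilityMeasure ν ∧ NullSingletonClass ν ∧
      ν Kᶜ = 0 ∧ ∀ x ∈ K, ∀ y ∈ K, ∀ n m : ℤ, x - y = n * ρ + m → x = y := by
  obtain ⟨s, hs0, hs⟩ : ∃ s : ℝ, s ≠ 0 ∧ ∀ n m : ℤ, (n * ρ + m : ℝ) ≠ 0 →
      s * (n * ρ + m) ∉ digitDiff := by
    have hnull : volume ({0} ∪ ⋃ p : ℤ × ℤ, ⋃ _ : (p.1 * ρ + p.2 : ℝ) ≠ 0,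
        (p.1 * ρ + p.2 : ℝ)⁻¹ • digitDiff) = 0 := by
      rw [measure_union_null_iff]
      refine ⟨by simp, measure_iUnion_null fun p => measure_iUnion_null fun _ => ?_⟩
      rw [Measure.addHaar_smul, volume_digitDiff, mul_zero]
    have hne : ({0} ∪ ⋃ p : ℤ × ℤ, ⋃ _ : (p.1 * ρ + p.2 : ℝ) ≠ 0,
        (p.1 * ρ + p.2 : ℝ)⁻¹ • digitDiff) ≠ univ := by
      intro h
      rw [h] at hnull
      simp at hnull
    obtain ⟨s, hs⟩ := (Set.ne_univ_iff_exists_notMem _).1 hne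
    simp only [mem_union, mem_singleton_iff, mem_iUnion, not_or, not_exists] at hs
    refine ⟨s, hs.1, fun n m hnm hmem => hs.2 (n, m) hnm ?_⟩
    rw [Set.mem_inv_smul_set_iff₀ hnm, smul_eq_mul, mul_comm]
    exact hmem
  -- Dilating the Cantor set by `s⁻¹` moves its differences off `ℤρ + ℤ`.
  let c : (ℕ → Bool) → ℝ := Cardinal.cantorFunction (1 / 4)
  have hgeo := summable_geometric_of_lt_one (r := (1 / 4 : ℝ)) (by norm_num) (by norm_num)
  have hcc : Continuous c := by
    refine continuous_tsum (u := fun i => (1 / 4 : ℝ) ^ i) (fun i => ?_) hgeo fun i b => ?_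
    · have : (fun b : ℕ → Bool => Cardinal.cantorFunctionAux (1 / 4) b i) =
          (fun t : Bool => cond t ((1 / 4 : ℝ) ^ i) 0) ∘ fun b => b i := by
        ext b; rfl
      rw [this]
      exact continuous_of_discreteTopology.comp (continuous_apply i)
    · unfold Cardinal.cantorFunctionAux
      cases b i <;> simp
  have hcd : ∀ a b, c a - c b ∈ digitDiff := by
    intro a b
    refine ⟨fun i => (cond (a i) 1 0) - cond (b i) 1 0, fun i => ?_, ?_⟩
    · rcases ha : a i <;> rcases hb : b i <;> simp [ha, hb]
    · simp only [c, Cardinal.cantorFunction]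
      rw [← (Cardinal.summable_cantor_function a (by norm_num) (by norm_num)).tsum_sub
        (Cardinal.summable_cantor_function b (by norm_num) (by norm_num))]
      refine tsum_congr fun i => ?_
      simp only [Cardinal.cantorFunctionAux]
      cases a i <;> cases b i <;> simp
  have hci : Injective c := Cardinal.cantorFunction_injective (by norm_num) (by norm_num)
  let g : (ℕ → Bool) → ℝ := fun b => c b / s
  have hgc : Continuous g := hcc.div_const s
  have hgi : Injective g := fun a b h => hci (by simpa [g, hs0] using h)
  have hunc : ¬ Countable (ℕ → Bool) := by
    intro h
    have := Cardinal.mk_le_aleph0_iff.2 h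
    rw [← Cardinal.power_def] at this
    simp only [Cardinal.mk_bool, Cardinal.mk_nat] at this
    exact absurd this (not_le.2 (Cardinal.cantor _))
  have hunc' : ¬ Countable ℝ := not_countable
  -- Any Borel isomorphism of `ℝ` with the Cantor space transports Lebesgue measure to an atomless one.
  let e : ℝ ≃ᵐ (ℕ → Bool) := PolishSpace.measurableEquivOfNotCountable hunc' hunc
  have hem : Measurable (g ∘ e) := hgc.measurable.comp e.measurable
  refine ⟨range g, (volume.restrict (Icc (0 : ℝ) 1)).map (g ∘ e), isCompact_range hgc, ?_, ?_, ?_,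
    ?_⟩
  · have : IsProbabilityMeasure (volume.restrict (Icc (0 : ℝ) 1)) := ⟨by simp⟩
    exact Measure.isProbabilityMeasure_map hem.aemeasurable
  · refine ⟨fun x => ?_⟩
    rw [Measure.map_apply hem (measurableSet_singleton x)]
    exact (Set.subsingleton_singleton.preimage (hgi.comp e.injective)).measure_zero _
  · rw [Measure.map_apply hem (isCompact_range hgc).measurableSet.compl]
    convert measure_empty (μ := volume.restrict (Icc (0 : ℝ) 1))
    ext x
    simp
  · rintro _ ⟨a, rfl⟩ _ ⟨b, rfl⟩ n m h
    by_contra hab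
    refine hs n m ?_ ?_
    · rw [← h]; exact sub_ne_zero.2 hab
    · rw [← h]
      have : s * (g a - g b) = c a - c b := by simp only [g]; field_simp
      rw [this]; exact hcd a b

/-! ### The quasi-invariant measure -/

lemma dense_orbit {ρ : ℝ} (hρ : Irrational ρ) (x : ℝ) :
    DenseRange fun p : ℤ × ℤ => x + (p.1 * ρ + p.2) := by
  have h1 : Dense (AddSubgroup.closure {ρ, 1} : Set ℝ) := by
    rw [dense_addSubgroupClosure_pair_iff]; simpa using hρ
  have h2 : DenseRange fun p : ℤ × ℤ => (p.1 * ρ + p.2 : ℝ) := by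
    refine h1.mono ?_
    intro y hy
    obtain ⟨a, b, h⟩ := AddSubgroup.mem_closure_pair.1 hy
    exact ⟨(a, b), by simpa using h⟩
  exact (Homeomorph.addLeft x).surjective.denseRange.comp h2 (Homeomorph.addLeft x).continuous

/-- An atomless measure `μ` of full support, of mass `1` on each unit interval, charging `K`, whose
Radon-Nikodym derivative under the translation by `ρ` is `exp (θ 1)`. It is the normalized sum over
`(n, m) : ℤ × ℤ` of the images of `exp (θ n) ν` under `x ↦ x + nρ + m`. -/
lemma exists_measure {ρ : ℝ} (hρ : Irrational ρ) {K : Set ℝ} (hK : IsCompact K) (ν : Measure ℝ)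
    [IsProbabilityMeasure ν] [NullSingletonClass ν] (hν : ν Kᶜ = 0) (θ : ℤ → ℝ → ℝ)
    (hc : ∀ n, Continuous (θ n)) (hadd : ∀ m n x, θ (m + n) x = θ m x + θ n (x + m * ρ))
    (hper : ∀ (n m : ℤ) (x : ℝ), θ n (x + m) = θ n x) (B : ℤ → ℝ) (hB : Summable B)
    (hθB : ∀ n, ∀ x ∈ K, Real.exp (θ n x) ≤ B n) :
    ∃ μ : Measure ℝ, NullSingletonClass μ ∧ μ.IsOpenPosMeasure ∧
      (∀ a, μ (Ioc a (a + 1)) = 1) ∧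
      (∀ A, MeasurableSet A →
        μ A = ∫⁻ x in (fun x => x + ρ) ⁻¹' A, ENNReal.ofReal (Real.exp (θ 1 x)) ∂μ) ∧
      μ K ≠ 0 := by
  let w : ℤ → ℝ → ENNReal := fun n x => ENNReal.ofReal (Real.exp (θ n x))
  have hw : ∀ n, Measurable (w n) := fun n =>
    (Real.continuous_exp.comp (hc n)).measurable.ennreal_ofReal
  have hw0 : ∀ n x, w n x ≠ 0 := fun n x => by simp [w, Real.exp_pos]
  let μ₀ : Measure ℝ := Measure.sum fun p : ℤ × ℤ =>
    (ν.withDensity (w p.1)).map fun x => x + (p.1 * ρ + p.2)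
  have hform : ∀ g : ℝ → ENNReal, Measurable g →
      ∫⁻ x, g x ∂μ₀ = ∑' p : ℤ × ℤ, ∫⁻ x, w p.1 x * g (x + (p.1 * ρ + p.2)) ∂ν := by
    intro g hg
    rw [lintegral_sum_measure]
    refine tsum_congr fun p => ?_
    rw [lintegral_map hg (measurable_add_const _)]
    exact lintegral_withDensity_eq_lintegral_mul _ (hw _) (hg.comp (measurable_add_const _))
  have hformA : ∀ A : Set ℝ, MeasurableSet A →
      μ₀ A = ∑' p : ℤ × ℤ, ∫⁻ x, w p.1 x * A.indicator 1 (x + (p.1 * ρ + p.2)) ∂ν := by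
    intro A hA
    rw [← hform _ (measurable_one.indicator hA), lintegral_indicator_one hA]
  have hmeas : ∀ (p : ℤ × ℤ) (A : Set ℝ), MeasurableSet A →
      Measurable fun x => w p.1 x * A.indicator 1 (x + (p.1 * ρ + p.2)) := fun p A hA =>
    (hw _).mul ((measurable_one.indicator hA).comp (measurable_add_const _))
  have hzero : ∀ A : Set ℝ, MeasurableSet A →
      (μ₀ A = 0 ↔ ∀ p : ℤ × ℤ, ∀ᵐ x ∂ν, x + (p.1 * ρ + p.2) ∉ A) := by
    intro A hA
    rw [hformA A hA, ENNReal.tsum_eq_zero]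
    refine forall_congr' fun p => ?_
    rw [lintegral_eq_zero_iff (hmeas p A hA)]
    refine eventually_congr (Eventually.of_forall fun x => ?_)
    simp [hw0]
  set c : ENNReal := ∑' n, ∫⁻ x, w n x ∂ν with hcdef
  have hIoc : ∀ a, μ₀ (Ioc a (a + 1)) = c := by
    intro a
    rw [hformA _ measurableSet_Ioc, ENNReal.summable.tsum_prod' fun _ => ENNReal.summable]
    refine tsum_congr fun n => ?_
    dsimp only
    rw [← lintegral_tsum fun m => (hmeas (n, m) _ measurableSet_Ioc).aemeasurable]
    dsimp only
    refine lintegral_congr fun x => ?_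
    rw [ENNReal.tsum_mul_left]
    obtain ⟨m, hm, huniq⟩ := existsUnique_add_zsmul_mem_Ioc (zero_lt_one' ℝ) (x + n * ρ) a
    -- Exactly one integer translate of `x + nρ` lies in the interval.
    rw [tsum_eq_single m]
    · rw [indicator_of_mem]
      · simp
      · simpa [add_assoc] using hm
    · intro m' hm'
      refine indicator_of_notMem (fun h => hm' (huniq m' ?_)) _
      simpa [add_assoc] using h
  have hθ0 : ∀ x, θ 0 x = 0 := fun x => by have := hadd 0 0 x; simpa using this
  have hc1 : 1 ≤ c := by
    calc (1 : ENNReal) = ∫⁻ x, w 0 x ∂ν := by simp [w, hθ0]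
      _ ≤ c := ENNReal.le_tsum 0
  have hcfin : c ≠ ⊤ := by
    have hle : c ≤ ∑' n, ENNReal.ofReal (B n) := by
      refine ENNReal.tsum_le_tsum fun n => ?_
      calc ∫⁻ x, w n x ∂ν ≤ ∫⁻ _, ENNReal.ofReal (B n) ∂ν := by
            refine lintegral_mono_ae ?_
            have : ∀ᵐ x ∂ν, x ∈ K := hν
            filter_upwards [this] with x hx
            exact ENNReal.ofReal_le_ofReal (hθB n x hx)
        _ = _ := by simp
    exact ne_top_of_le_ne_top hB.tsum_ofReal_ne_top hle
  have hc0 : c ≠ 0 := (zero_lt_one.trans_le hc1).ne'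
  have hatom : ∀ x, μ₀ {x} = 0 := by
    intro x
    rw [hzero _ (measurableSet_singleton x)]
    intro p
    have : ∀ᵐ y ∂ν, y ≠ x - (p.1 * ρ + p.2) := by
      rw [ae_iff]; simp
    filter_upwards [this] with y hy
    exact fun h => hy (eq_sub_of_add_eq h)
  have hopen : ∀ U : Set ℝ, IsOpen U → U.Nonempty → μ₀ U ≠ 0 := by
    intro U hU hne h0
    rw [hzero _ hU.measurableSet, ← ae_all_iff] at h0
    obtain ⟨x, hx⟩ := h0.exists
    obtain ⟨p, hp⟩ := (dense_orbit hρ x).exists_mem_open hU hne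
    exact hx p hp
  have hquasi : ∀ A, MeasurableSet A →
        μ₀ A = ∫⁻ x in (fun x => x + ρ) ⁻¹' A, w 1 x ∂μ₀ := by
    intro A hA
    have hA' : MeasurableSet ((fun x => x + ρ) ⁻¹' A) := measurable_add_const ρ hA
    -- Re-index `n` to `n + 1` and use the cocycle identity.
    rw [← lintegral_indicator hA', hform _ ((hw 1).indicator hA'), hformA A hA,
      ← ((Equiv.addRight (1 : ℤ)).prodCongr (Equiv.refl ℤ)).tsum_eq]
    refine tsum_congr fun p => lintegral_congr fun x => ?_
    simp only [Equiv.prodCongr_apply, Prod.map_fst, Prod.map_snd, Equiv.coe_addRight,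
      Equiv.refl_apply]
    have e1 : x + (((p.1 + 1 : ℤ) : ℝ) * ρ + p.2) = x + (p.1 * ρ + p.2) + ρ := by
      push_cast; ring
    have e2 : w (p.1 + 1) x = w p.1 x * w 1 (x + (p.1 * ρ + p.2)) := by
      simp only [w]
      rw [← ENNReal.ofReal_mul (Real.exp_pos _).le, ← Real.exp_add, hadd, ← add_assoc, hper]
    rw [e1, e2, mul_assoc]
    congr 1
    by_cases h : x + (p.1 * ρ + p.2) + ρ ∈ A
    · rw [indicator_of_mem h, indicator_of_mem (by exact h)]; simp
    · rw [indicator_of_notMem h, indicator_of_notMem (by exact h)]; simp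
  have hcinv : c⁻¹ ≠ 0 := ENNReal.inv_ne_zero.2 hcfin
  refine ⟨c⁻¹ • μ₀, ⟨fun x => by simp [hatom]⟩, ⟨fun U hU hne => ?_⟩, fun a => ?_,
    fun A hA => ?_, ?_⟩
  · simpa [hcfin] using hopen U hU hne
  · rw [Measure.smul_apply, hIoc, smul_eq_mul, ENNReal.inv_mul_cancel hc0 hcfin]
  · rw [Measure.restrict_smul, lintegral_smul_measure, Measure.smul_apply, hquasi A hA]
  · rw [Measure.smul_apply, smul_eq_mul]
    refine mul_ne_zero hcinv fun h0 => ?_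
    have h2 := (hzero _ hK.measurableSet).1 h0 (0, 0)
    have h3 : ∀ᵐ x ∂ν, x ∈ K := hν
    obtain ⟨x, hx, hxK⟩ := (h2.and h3).exists
    simp [hxK] at hx

/-! ### The conjugacy -/

/-- The distribution function of an atomless measure of full support and mass `1` on each unit
interval is a homeomorphism of the line commuting with the unit translation, and sends the measure
to Lebesgue measure. -/
lemma exists_distribution (μ : Measure ℝ) [NullSingletonClass μ] [μ.IsOpenPosMeasure]
    (h1 : ∀ a, μ (Ioc a (a + 1)) = 1) :
    ∃ H : ℝ ≃o ℝ, (∀ x, H (x + 1) = H x + 1) ∧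
      (∀ a b, a ≤ b → μ (Ioc a b) = ENNReal.ofReal (H b - H a)) ∧ μ.map H = volume := by
  have hfin : ∀ a b, μ (Ioc a b) < ⊤ := by
    intro a b
    obtain ⟨n, hn⟩ := exists_nat_ge (b - a)
    have : ∀ n : ℕ, μ (Ioc a (a + n)) < ⊤ := by
      intro n
      induction n with
      | zero => simp
      | succ n ih =>
        have hsub : Ioc a (a + (n + 1 : ℕ)) ⊆ Ioc a (a + n) ∪ Ioc (a + n) (a + n + 1) := by
          intro x hx
          simp only [mem_union, mem_Ioc, Nat.cast_add, Nat.cast_one] at hx ⊢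
          by_cases h : x ≤ a + n
          · exact Or.inl ⟨hx.1, h⟩
          · exact Or.inr ⟨not_le.1 h, by linarith [hx.2]⟩
        refine (measure_mono hsub).trans_lt ((measure_union_le _ _).trans_lt ?_)
        rw [h1]
        exact ENNReal.add_lt_top.2 ⟨ih, ENNReal.one_lt_top⟩
    exact (measure_mono (Ioc_subset_Ioc_right (by linarith))).trans_lt (this n)
  have hint : ∀ a b, IntervalIntegrable (fun _ => (1 : ℝ)) μ a b := by
    intro a b
    exact ⟨integrableOn_const (hfin _ _).ne, integrableOn_const (hfin _ _).ne⟩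
  let h : ℝ → ℝ := fun x => ∫ _ in (0 : ℝ)..x, (1 : ℝ) ∂μ
  have hdiff : ∀ a b, a ≤ b → h b - h a = (μ (Ioc a b)).toReal := by
    intro a b hab
    simp only [h]
    rw [intervalIntegral.integral_interval_sub_left (hint _ _) (hint _ _),
      intervalIntegral.integral_of_le hab]
    simp [Measure.real]
  have hcont : Continuous h := intervalIntegral.continuous_primitive hint 0
  have hmono : StrictMono h := by
    intro a b hab
    have h2 := hdiff a b hab.le
    have h3 : 0 < μ (Ioc a b) :=
      (isOpen_Ioo.measure_pos μ (nonempty_Ioo.2 hab)).trans_le (measure_mono Ioo_subset_Ioc_self)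
    have := ENNReal.toReal_pos h3.ne' (hfin a b).ne
    linarith
  have hper : ∀ x, h (x + 1) = h x + 1 := by
    intro x
    have h2 := hdiff x (x + 1) (by linarith)
    rw [h1] at h2
    simp at h2
    linarith
  let hC : CircleDeg1Lift := ⟨⟨h, hmono.monotone⟩, hper⟩
  have hsurj : Surjective h := hcont.surjective hC.tendsto_atTop hC.tendsto_atBot
  let H : ℝ ≃o ℝ := hmono.orderIsoOfSurjective h hsurj
  have hH : ∀ x, H x = h x := fun x => rfl
  have hIoc : ∀ a b, a ≤ b → μ (Ioc a b) = ENNReal.ofReal (H b - H a) := by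
    intro a b hab
    rw [hH, hH, hdiff a b hab, ENNReal.ofReal_toReal (hfin a b).ne]
  refine ⟨H, hper, hIoc, ?_⟩
  symm
  refine Real.measure_ext_Ioo_rat fun p q => ?_
  rw [Measure.map_apply H.continuous.measurable measurableSet_Ioo, Real.volume_Ioo]
  have hpre : H ⁻¹' (Ioo (p : ℝ) q) = Ioo (H.symm p) (H.symm q) := by
    rw [← OrderIso.preimage_Ioo]
  rcases le_total (p : ℝ) q with hpq | hpq
  · rw [hpre, Ioo_ae_eq_Ioc.measure_eq, hIoc _ _ (H.symm.monotone hpq)]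
    simp
  · rw [Ioo_eq_empty (not_lt.2 hpq), ENNReal.ofReal_of_nonpos (by linarith)]
    simp

/-- Conjugating the translation by `ρ` by the distribution function `H` gives a map whose increments
are the integrals of the continuous function `exp φ ∘ H⁻¹`, by quasi-invariance of `μ` and the change
of variables `H`. -/
lemma hasDerivAt_conj {ρ : ℝ} {μ : Measure ℝ} {φ : ℝ → ℝ} (hφ : Continuous φ) {H : ℝ ≃o ℝ}
    (hIoc : ∀ a b, a ≤ b → μ (Ioc a b) = ENNReal.ofReal (H b - H a)) (hmap : μ.map H = volume)
    (hquasi : ∀ A, MeasurableSet A →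
        μ A = ∫⁻ x in (fun x => x + ρ) ⁻¹' A, ENNReal.ofReal (Real.exp (φ x)) ∂μ) (z : ℝ) :
    HasDerivAt (fun z => H (H.symm z + ρ)) (Real.exp (φ (H.symm z))) z := by
  have hHc : Continuous H := H.continuous
  have hHs : Continuous H.symm := H.symm.continuous
  let k : ℝ → ℝ := fun z => Real.exp (φ (H.symm z))
  have hk : Continuous k := Real.continuous_exp.comp (hφ.comp hHs)
  have hinc : ∀ a b, a ≤ b → H (H.symm b + ρ) - H (H.symm a + ρ) = ∫ s in a..b, k s := by
    intro a b hab
    have hab' : H.symm a + ρ ≤ H.symm b + ρ := by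
      have := H.symm.monotone hab; linarith
    have e1 := hIoc _ _ hab'
    rw [hquasi _ measurableSet_Ioc] at e1
    have e2 : (fun x => x + ρ) ⁻¹' (Ioc (H.symm a + ρ) (H.symm b + ρ)) = H ⁻¹' (Ioc a b) := by
      rw [OrderIso.preimage_Ioc]
      ext x; simp
    have e3 : ∫⁻ s in Ioc a b, ENNReal.ofReal (k s) =
        ∫⁻ x in H ⁻¹' (Ioc a b), ENNReal.ofReal (Real.exp (φ x)) ∂μ := by
      rw [← hmap, setLIntegral_map measurableSet_Ioc hk.measurable.ennreal_ofReal hHc.measurable]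
      simp [k]
    rw [e2, ← e3] at e1
    rw [intervalIntegral.integral_of_le hab, integral_eq_lintegral_of_nonneg_ae
      (Eventually.of_forall fun s => (Real.exp_pos _).le) hk.aestronglyMeasurable, e1,
      ENNReal.toReal_ofReal]
    exact sub_nonneg.2 (H.monotone hab')
  have hinc' : ∀ b, H (H.symm b + ρ) = H (H.symm 0 + ρ) + ∫ s in (0 : ℝ)..b, k s := by
    intro b
    rcases le_total 0 b with h | h
    · rw [← hinc 0 b h]; ring
    · rw [intervalIntegral.integral_symm, ← hinc b 0 h]; ring
  have heq : (fun z => H (H.symm z + ρ)) =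
      fun z => H (H.symm 0 + ρ) + ∫ s in (0 : ℝ)..z, k s := funext hinc'
  rw [heq]
  exact (intervalIntegral.integral_hasDerivAt_right (hk.intervalIntegrable _ _)
    hk.aestronglyMeasurable.stronglyMeasurableAtFilter hk.continuousAt).const_add _

lemma exists_diffeo {ρ : ℝ} {φ : ℝ → ℝ} (hφ : Continuous φ) {H : ℝ ≃o ℝ}
    (hper : ∀ x, H (x + 1) = H x + 1)
    (hderiv : ∀ z, HasDerivAt (fun z => H (H.symm z + ρ)) (Real.exp (φ (H.symm z))) z) :
    ∃ f : C1Diffeo, (∀ x, f.F (H x) = H (x + ρ)) ∧ (∀ x, f.Finv (H x) = H (x - ρ)) ∧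
      (∀ x, HasDerivAt f.F (Real.exp (φ x)) (H x)) ∧
      ∀ x, HasDerivAt f.Finv (Real.exp (φ (x - ρ)))⁻¹ (H x) := by
  have hHc : Continuous H := H.continuous
  have hHs : Continuous H.symm := H.symm.continuous
  have hsper : ∀ z, H.symm (z + 1) = H.symm z + 1 := fun z => by
    apply H.injective; rw [hper]; simp
  let F : ℝ → ℝ := fun z => H (H.symm z + ρ)
  let G : ℝ → ℝ := fun z => H (H.symm z - ρ)
  have hFG : ∀ z, F (G z) = z := fun z => by simp [F, G]
  have hGF : ∀ z, G (F z) = z := fun z => by simp [F, G]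
  have hGc : Continuous G := hHc.comp (hHs.sub continuous_const)
  have hG : ∀ z, HasDerivAt G (Real.exp (φ (H.symm z - ρ)))⁻¹ z := by
    intro z
    have := hderiv (G z)
    have e : H.symm (G z) = H.symm z - ρ := by simp [G]
    rw [e] at this
    exact HasDerivAt.of_local_left_inverse hGc.continuousAt this (Real.exp_pos _).ne'
      (Eventually.of_forall hFG)
  refine ⟨⟨F, G, ?_, ?_, ?_, ?_, hGF, hFG⟩, ?_, ?_, ?_, ?_⟩
  · rw [contDiff_one_iff_deriv]
    refine ⟨fun z => (hderiv z).differentiableAt, ?_⟩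
    rw [show deriv F = _ from funext fun z => (hderiv z).deriv]
    exact Real.continuous_exp.comp (hφ.comp hHs)
  · rw [contDiff_one_iff_deriv]
    refine ⟨fun z => (hG z).differentiableAt, ?_⟩
    rw [show deriv G = _ from funext fun z => (hG z).deriv]
    exact (Real.continuous_exp.comp (hφ.comp (hHs.sub continuous_const))).inv₀
      fun z => (Real.exp_pos _).ne'
  · intro z
    rw [(hderiv z).deriv]
    exact Real.exp_pos _
  · intro z
    simp only [F]
    rw [hsper, add_right_comm, hper]
  · intro x; simp [F]
  · intro x; simp [G]
  · intro x; simpa using hderiv (H x)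
  · intro x; simpa using hG (H x)

/-- The `n`-th iterate is conjugate to the translation by `nρ`, with derivative `exp (θ n x)` at
`H x`. -/
lemma iterZ_conj {ρ : ℝ} {θ : ℤ → ℝ → ℝ}
    (hadd : ∀ m n x, θ (m + n) x = θ m x + θ n (x + m * ρ)) {H : ℝ ≃o ℝ} {f : C1Diffeo}
    (hF : ∀ x, f.F (H x) = H (x + ρ)) (hG : ∀ x, f.Finv (H x) = H (x - ρ))
    (hdF : ∀ x, HasDerivAt f.F (Real.exp (θ 1 x)) (H x))
    (hdG : ∀ x, HasDerivAt f.Finv (Real.exp (θ 1 (x - ρ)))⁻¹ (H x)) (n : ℤ) (x : ℝ) :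
    f.iterZ n (H x) = H (x + n * ρ) ∧
      HasDerivAt (f.iterZ n) (Real.exp (θ n x)) (H x) := by
  have hθ0 : ∀ x, θ 0 x = 0 := fun x => by have := hadd 0 0 x; simpa using this
  have hpos : ∀ n : ℕ, f.F^[n] (H x) = H (x + n * ρ) ∧
      HasDerivAt (f.F^[n]) (Real.exp (θ n x)) (H x) := by
    intro n
    induction n with
    | zero => simp [hθ0, hasDerivAt_id]
    | succ n ih =>
      refine ⟨?_, ?_⟩
      · rw [iterate_succ_apply', ih.1, hF]; push_cast; ring_nf
      · rw [iterate_succ']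
        have h1 := hdF (x + n * ρ)
        rw [← ih.1] at h1
        have h2 := h1.comp _ ih.2
        have e := hadd n 1 x
        push_cast at e ⊢
        rw [e, Real.exp_add, mul_comm]
        exact h2
  have hneg : ∀ n : ℕ, f.Finv^[n] (H x) = H (x - n * ρ) ∧
      HasDerivAt (f.Finv^[n]) (Real.exp (θ (-n) x)) (H x) := by
    intro n
    induction n with
    | zero => simp [hθ0, hasDerivAt_id]
    | succ n ih =>
      refine ⟨?_, ?_⟩
      · rw [iterate_succ_apply', ih.1, hG]; push_cast; ring_nf
      · rw [iterate_succ']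
        have h1 := hdG (x - n * ρ)
        rw [← ih.1] at h1
        have h2 := h1.comp _ ih.2
        have e := hadd (-(n + 1 : ℕ)) 1 x
        have e1 : (-((n + 1 : ℕ) : ℤ) + 1) = -(n : ℤ) := by push_cast; ring
        have e2 : x + ((-((n + 1 : ℕ) : ℤ) : ℤ) : ℝ) * ρ = x - n * ρ - ρ := by push_cast; ring
        rw [e1, e2] at e
        have e3 : θ (-((n + 1 : ℕ) : ℤ)) x = -θ 1 (x - n * ρ - ρ) + θ (-n) x := by linarith
        rw [e3, Real.exp_add, Real.exp_neg]
        exact h2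
  cases n with
  | ofNat n => simpa [C1Diffeo.iterZ] using hpos n
  | negSucc n =>
    have h := hneg (n + 1)
    rw [Int.negSucc_eq]
    refine ⟨?_, ?_⟩
    · have := h.1
      rw [show x + ((-((n : ℤ) + 1) : ℤ) : ℝ) * ρ = x - (n + 1 : ℕ) * ρ by push_cast; ring, ← this]
      rfl
    · have := h.2
      push_cast at this
      exact this

/-! ### Conclusion -/

/-- **Theorem (H. Kodama & S. Matsumoto).** For each irrational angle `ρ` there exists a
minimal `C¹` circle diffeomorphism `f` of rotation number `ρ` admitting a measurable
fundamental domain `C` of positive Lebesgue measure; moreover for each `x₀ ∈ C` one has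
`S := Σ_{n ∈ ℤ} D(fⁿ)(x₀) < ∞`. -/
theorem kodama_matsumoto (ρ : ℝ) (hρ : Irrational ρ) :
    ∃ f : C1Diffeo, f.rot = ρ ∧
      (∀ x : 𝕊, Dense (Set.range fun n : ℤ => f.mapZ n x)) ∧
      ∃ C : Set 𝕊, MeasurableSet C ∧ 0 < volume C ∧
        (∀ n : ℤ, n ≠ 0 → Disjoint (f.mapZ n '' C) C) ∧
        ∀ x₀ ∈ C, Summable fun n : ℤ => f.DfZ n x₀ := by
  obtain ⟨K, ν, hK, hν1, hν2, hνK, hsec⟩ := exists_noAtoms_section ρ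
  have hKne : K.Nonempty := by
    have h3 : ∀ᵐ x ∂ν, x ∈ K := hνK
    exact h3.exists
  have hmk : Continuous ((↑) : ℝ → 𝕊) := AddCircle.continuous_mk' 1
  have hcoe : ∀ {x y : ℝ}, (x : 𝕊) = y → ∃ m : ℤ, x - y = m := by
    intro x y h
    rw [← sub_eq_zero, ← AddCircle.coe_sub, AddCircle.coe_eq_zero_iff] at h
    obtain ⟨m, hm⟩ := h
    exact ⟨m, by simpa using hm.symm⟩
  have hsmul : ∀ n : ℤ, n • (ρ : 𝕊) = ((n * ρ : ℝ) : 𝕊) := fun n => by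
    rw [← zsmul_eq_mul, AddCircle.coe_zsmul]
  have hα : ∀ n : ℤ, n ≠ 0 → ∀ x ∈ ((↑) : ℝ → 𝕊) '' K,
      x + n • (ρ : 𝕊) ∉ ((↑) : ℝ → 𝕊) '' K := by
    rintro n hn _ ⟨x, hx, rfl⟩ ⟨y, hy, hxy⟩
    rw [hsmul, ← AddCircle.coe_add] at hxy
    obtain ⟨m, hm⟩ := hcoe hxy
    have hxy' := hsec y hy x hx n m (by linarith)
    subst hxy'
    have h0 : (n : ℝ) * ρ = (-m : ℤ) := by push_cast; linarith
    exact (hρ.intCast_mul hn).ne_int _ h0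
  obtain ⟨θ, hθc, hθa, B, hB, hθB⟩ := exists_cocycle (hK.image hmk) (hKne.image _) (ρ : 𝕊) hα
  let Θ : ℤ → ℝ → ℝ := fun n x => θ n (x : 𝕊)
  have hΘc : ∀ n, Continuous (Θ n) := fun n => (hθc n).comp hmk
  have hΘa : ∀ m n x, Θ (m + n) x = Θ m x + Θ n (x + m * ρ) := fun m n x => by
    simp only [Θ]
    rw [hθa, hsmul, AddCircle.coe_add]
  have hΘp : ∀ (n m : ℤ) (x : ℝ), Θ n (x + m) = Θ n x := fun n m x => by
    simp only [Θ]
    rw [show (m : ℝ) = m • (1 : ℝ) by simp, AddCircle.coe_add, AddCircle.coe_zsmul,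
      AddCircle.coe_period, smul_zero, add_zero]
  have hΘB : ∀ n, ∀ x ∈ K, Real.exp (Θ n x) ≤ B n := fun n x hx =>
    hθB n _ (mem_image_of_mem _ hx)
  obtain ⟨μ, hμ1, hμ2, hμ3, hμ4, hμ5⟩ :=
    exists_measure hρ hK ν hνK Θ hΘc hΘa hΘp B hB hΘB
  obtain ⟨H, hHper, hIoc, hmap⟩ := exists_distribution μ hμ3
  obtain ⟨f, hF, hG, hdF, hdG⟩ :=
    exists_diffeo (hΘc 1) hHper (hasDerivAt_conj (hΘc 1) hIoc hmap hμ4)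
  have hiter := iterZ_conj hΘa hF hG hdF hdG
  have hmapZ : ∀ (n : ℤ) (x : ℝ), f.mapZ n ((H x : ℝ) : 𝕊) = ((H (x + n * ρ) : ℝ) : 𝕊) := by
    intro n x
    rw [← (hiter n x).1]
    rfl
  have hHint : ∀ (m : ℤ) (x : ℝ), H (x + m) = H x + m := by
    let hC : CircleDeg1Lift := ⟨⟨H, H.monotone⟩, hHper⟩
    intro m x
    exact hC.map_add_int x m
  have hHcoe : ∀ (m : ℤ) (x : ℝ), ((H (x + m) : ℝ) : 𝕊) = ((H x : ℝ) : 𝕊) := by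
    intro m x
    rw [hHint, show (m : ℝ) = m • (1 : ℝ) by simp, AddCircle.coe_add, AddCircle.coe_zsmul,
      AddCircle.coe_period, smul_zero, add_zero]
  have hCc : IsCompact ((fun x : ℝ => ((H x : ℝ) : 𝕊)) '' K) :=
    hK.image (hmk.comp H.continuous)
  refine ⟨f, ?_, ?_, (fun x : ℝ => ((H x : ℝ) : 𝕊)) '' K, hCc.measurableSet, ?_, ?_, ?_⟩
  -- The translation number is invariant under the conjugacy `H`.
  · let hC : CircleDeg1Lift := ⟨⟨H, H.monotone⟩, hHper⟩
    have hsemi : Semiconj hC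
        ((CircleDeg1Lift.translate (Multiplicative.ofAdd ρ) : CircleDeg1Liftˣ) : CircleDeg1Lift)
        f.deg1 := by
      intro x
      rw [CircleDeg1Lift.translate_apply]
      change H (ρ + x) = f.F (H x)
      rw [hF, add_comm]
    have := CircleDeg1Lift.translationNumber_eq_of_semiconj hsemi
    rw [CircleDeg1Lift.translationNumber_translate] at this
    exact this.symm
  · intro z
    induction z using QuotientAddGroup.induction_on with | H z => ?_
    obtain ⟨x, rfl⟩ := H.surjective z
    have hd : DenseRange ((fun y : ℝ => ((H y : ℝ) : 𝕊)) ∘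
        fun p : ℤ × ℤ => x + (p.1 * ρ + p.2)) := by
      refine DenseRange.comp ?_ (dense_orbit hρ x) (hmk.comp H.continuous)
      exact ((QuotientAddGroup.mk_surjective).comp H.surjective).denseRange
    refine Dense.mono ?_ hd
    rintro _ ⟨p, rfl⟩
    refine ⟨p.1, ?_⟩
    simp only [comp_apply]
    rw [← add_assoc, hHcoe]
    exact hmapZ p.1 x
  · rw [pos_iff_ne_zero]
    intro h0
    -- If `C` were null, so would be its preimage in `ℝ`, which contains `H '' K`.
    have h1 : volume (((↑) : ℝ → 𝕊) ⁻¹' ((fun x : ℝ => ((H x : ℝ) : 𝕊)) '' K)) = 0 := by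
      refine measure_mono_null (t := ⋃ m : ℤ, ((↑) : ℝ → 𝕊) ⁻¹'
        ((fun x : ℝ => ((H x : ℝ) : 𝕊)) '' K) ∩ Ioc (m : ℝ) (m + 1)) ?_ ?_
      · intro y hy
        rw [← inter_iUnion, iUnion_Ioc_intCast]
        exact ⟨hy, mem_univ y⟩
      · refine measure_iUnion_null fun m => ?_
        have := (UnitAddCircle.measurePreserving_mk (m : ℝ)).measure_preimage
          hCc.measurableSet.nullMeasurableSet
        rw [h0, Measure.restrict_apply (hmk.measurable hCc.measurableSet)] at this
        exact this
    rw [← hmap, Measure.map_apply H.continuous.measurable (hmk.measurable hCc.measurableSet)] at h1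
    refine hμ5 (measure_mono_null ?_ h1)
    intro x hx
    exact ⟨x, hx, rfl⟩
  · intro n hn
    rw [Set.disjoint_left]
    rintro _ ⟨_, ⟨x, hx, rfl⟩, rfl⟩ ⟨y, hy, hxy⟩
    simp only [hmapZ] at hxy
    obtain ⟨m, hm⟩ := hcoe hxy
    have h1 : y = x + n * ρ + m := by
      apply H.injective
      rw [hHint]; linarith
    refine hα n hn x (mem_image_of_mem _ hx) ⟨y, hy, ?_⟩
    rw [hsmul, ← AddCircle.coe_add, h1, AddCircle.coe_add (1 : ℝ) _ (m : ℝ),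
      show (m : ℝ) = m • (1 : ℝ) by simp, AddCircle.coe_zsmul, AddCircle.coe_period, smul_zero,
      add_zero]
  · rintro _ ⟨x, hx, rfl⟩
    refine Summable.of_nonneg_of_le (fun n => ?_) (fun n => ?_) hB
    all_goals
      have h1 : f.DfZ n ((H x : ℝ) : 𝕊) = Real.exp (Θ n x) := (hiter n x).2.deriv
    · rw [h1]; exact (Real.exp_pos _).le
    · rw [h1]; exact hΘB n x hx
end
end
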